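/- arXiv:1807.10017 — 3 statements merged into one kernel-verified Lean document; each statement's English description precedes it below -/
import Mathlib

section
/- With F_t(x)=F(a_t,b_t;c_t;x): (1) for each fixed x∈(0,1], the map t∈[1,∞)↦F_t(x) is strictly increasing, and for each fixed x∈(−∞,0) it is strictly decreasing; (2) for all t≥1 and all x∈(−∞,0], |∂_tF_t(x)|≤−2x·F_t(x)/(t+1)²; (3) there exists C>0 such that |∂_xF(a_n,b_n;c_n;x)|≤C+C|ln(1−x)| for all integers n≥2 and all x∈[0,1); (4) there exists C>0 such that |∂_tF_t(x)| evaluated at integer t=n satisfies |∂_nF_n(x)|≤C·ln n/n² for all integers n≥2 and all x∈[0,1]; (5) there exists C>0 such that |∂²_{xx}F(a_n,b_n;c_n;x)|≤C/(1−x) for all integers n≥2 and all x∈[0,1). -/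
open MeasureTheory Real Set

/-- Rising factorial (Pochhammer symbol) `(a)_k`. -/
noncomputable def poch (a : ℝ) (k : ℕ) : ℝ := (ascPochhammer ℝ k).eval a

/-- Gauss hypergeometric function `F(a,b;c;x)`: given by Euler's integral representation
when `c > b > 0` (valid for all `x ∈ (-∞,1]`), and by the defining power series otherwise. -/
noncomputable def hyper (a b c x : ℝ) : ℝ :=
  if b < c ∧ 0 < b then
    Real.Gamma c / (Real.Gamma b * Real.Gamma (c - b)) *
      ∫ t in (0:ℝ)..1, t ^ (b - 1) * (1 - t) ^ (c - b - 1) * (1 - x * t) ^ (-a)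
  else
    ∑' k : ℕ, poch a k * poch b k / (poch c k * (Nat.factorial k)) * x ^ k

/-- The coefficient `a_t = (t - √(t²+8))/2`. -/
noncomputable def aCoef (t : ℝ) : ℝ := (t - Real.sqrt (t ^ 2 + 8)) / 2

/-- The coefficient `b_t = (t + √(t²+8))/2`. -/
noncomputable def bCoef (t : ℝ) : ℝ := (t + Real.sqrt (t ^ 2 + 8)) / 2

/-- `F_t(x) = F(a_t, b_t; t+1; x)`. -/
noncomputable def Fhyp (t x : ℝ) : ℝ := hyper (aCoef t) (bCoef t) (t + 1) x

/-- The dispersion function `ζ_n` associated with the quadratic profile `f₀(r) = Ar² + B`. -/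
noncomputable def zetaDisp (A B : ℝ) (n : ℕ) (x : ℝ) : ℝ :=
  Fhyp n x * (1 - x + (A + 2 * B) / (A * ((n : ℝ) + 1)) * x)
    + ∫ τ in (0:ℝ)..1, Fhyp n (τ * x) * τ ^ n * (-1 + 2 * x * τ)


lemma bw_integrable {p q : ℝ} (hp : 0 < p) (hq : 0 < q) :
    IntervalIntegrable (fun s : ℝ => s ^ (p - 1) * (1 - s) ^ (q - 1)) volume 0 1 := by
  have h := Complex.betaIntegral_convergent (u := p) (v := q) (by simpa) (by simpa)
  rw [intervalIntegrable_iff_integrableOn_Ioc_of_le (by simp)] at h ⊢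
  refine (IntegrableOn.congr_fun h.re ?_ measurableSet_Ioc)
  intro x hx
  have h1 := hx.1
  have h2 := hx.2
  simp only
  norm_cast
  rw [← Complex.ofReal_cpow h1.le, ← Complex.ofReal_cpow (by linarith), RCLike.re_to_complex,
        Complex.re_mul_ofReal, Complex.ofReal_re]

lemma bw_integral {p q : ℝ} (hp : 0 < p) (hq : 0 < q) :
    ∫ s in (0:ℝ)..1, s ^ (p - 1) * (1 - s) ^ (q - 1)
      = Real.Gamma p * Real.Gamma q / Real.Gamma (p + q) := by
  have h := ProbabilityTheory.beta_eq_betaIntegralReal p q hp hq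
  rw [ProbabilityTheory.beta] at h
  rw [h, Complex.betaIntegral, intervalIntegral.integral_of_le (by norm_num),
    intervalIntegral.integral_of_le (by norm_num), ← RCLike.re_to_complex, ← integral_re]
  · refine setIntegral_congr_fun measurableSet_Ioc fun x ⟨hx1, hx2⟩ ↦ ?_
    norm_cast
    rw [← Complex.ofReal_cpow hx1.le, ← Complex.ofReal_cpow (by linarith), RCLike.re_to_complex,
        Complex.re_mul_ofReal, Complex.ofReal_re]
  · have h := Complex.betaIntegral_convergent (u := p) (v := q) (by simpa) (by simpa)
    rwa [intervalIntegrable_iff_integrableOn_Ioc_of_le (by simp)] at h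

lemma one_sub_mul_pos' {x s : ℝ} (hx : x < 1) (h0 : 0 ≤ s) (h1 : s ≤ 1) : 0 < 1 - x * s := by
  rcases le_total x 0 with h | h
  · nlinarith
  · nlinarith

lemma J_contOn {x : ℝ} (hx : x < 1) (β : ℝ) :
    ContinuousOn (fun s : ℝ => (1 - x * s) ^ β) (uIcc 0 1) := by
  rw [uIcc_of_le zero_le_one]
  refine ContinuousOn.rpow_const (by fun_prop) ?_
  intro s hs
  exact Or.inl (one_sub_mul_pos' hx hs.1 hs.2).ne'

lemma J_integrable {w : ℝ → ℝ} (hw : IntervalIntegrable w volume 0 1) {x : ℝ} (hx : x < 1) (β : ℝ) :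
    IntervalIntegrable (fun s => w s * (1 - x * s) ^ β) volume 0 1 :=
  hw.mul_continuousOn (J_contOn hx β)

lemma J_hasDerivAt {w : ℝ → ℝ} (hw : IntervalIntegrable w volume 0 1) {x : ℝ} (hx : x < 1) (β : ℝ) :
    HasDerivAt (fun y => ∫ s in (0:ℝ)..1, w s * (1 - y * s) ^ β)
      (-β * ∫ s in (0:ℝ)..1, (w s * s) * (1 - x * s) ^ (β - 1)) x := by
  obtain ⟨B, hB⟩ := (isCompact_Icc (a := min 1 ((1 - x) / 2)) (b := 2 + |x|)).exists_bound_of_continuousOn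
    (f := fun u : ℝ => u ^ (β - 1)) (by
      refine ContinuousOn.rpow_const (by fun_prop) ?_
      intro u hu
      left
      have : 0 < min 1 ((1 - x) / 2) := lt_min one_pos (by linarith)
      exact (this.trans_le hu.1).ne')
  have hS : Ioo (x - 1) ((1 + x) / 2) ∈ nhds x := Ioo_mem_nhds (by linarith) (by linarith)
  have key := intervalIntegral.hasDerivAt_integral_of_dominated_loc_of_deriv_le
    (μ := volume) (a := 0) (b := 1) (x₀ := x) (s := Ioo (x - 1) ((1 + x) / 2))
    (F := fun y s => w s * (1 - y * s) ^ β)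
    (F' := fun y s => -β * ((w s * s) * (1 - y * s) ^ (β - 1)))
    (bound := fun s => |β| * (|w s| * B)) hS ?_ (J_integrable hw hx β) ?_ ?_ ?_ ?_
  · have h2 := key.2
    rwa [intervalIntegral.integral_const_mul] at h2
  · filter_upwards [hS] with y hy
    exact (J_integrable hw (by linarith [hy.2]) β).def'.aestronglyMeasurable
  · have hws : IntervalIntegrable (fun s => w s * s) volume 0 1 :=
      hw.mul_continuousOn (by fun_prop)
    exact ((J_integrable hws hx (β - 1)).const_mul (-β)).def'.aestronglyMeasurable
  · refine Filter.Eventually.of_forall fun s hs y hy => ?_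
    rw [uIoc_of_le zero_le_one] at hs
    have hs0 := hs.1
    have hs1 := hs.2
    have hb : ‖(1 - y * s) ^ (β - 1)‖ ≤ B := by
      apply hB
      constructor
      · rcases le_total y 0 with h | h
        · exact (min_le_left _ _).trans (by nlinarith)
        · exact (min_le_right _ _).trans (by nlinarith [hy.2])
      · have : -y ≤ 1 + |x| := by linarith [hy.1, neg_abs_le x, neg_le_abs x]
        have h3 : 0 ≤ 1 + |x| := by positivity
        nlinarith
    rw [norm_mul, norm_mul, norm_mul, norm_neg, Real.norm_eq_abs, Real.norm_eq_abs (w s), Real.norm_eq_abs s, abs_of_pos hs0]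
    gcongr
    nlinarith [abs_nonneg (w s)]
  · exact (hw.abs.mul_const B).const_mul _
  · refine Filter.Eventually.of_forall fun s hs y hy => ?_
    rw [uIoc_of_le zero_le_one] at hs
    have hpos := one_sub_mul_pos' (x := y) (by linarith [hy.2]) hs.1.le hs.2
    have h1 : HasDerivAt (fun y : ℝ => 1 - y * s) (-s) y := by
      simpa using ((hasDerivAt_id y).mul_const s).const_sub 1
    have h2 := (h1.rpow_const (p := β) (Or.inl hpos.ne')).const_mul (w s)
    convert! h2 using 1
    ring

/-- The hypergeometric ODE for the Euler integral. -/
lemma J_ode {b c α x : ℝ} (hb : 0 < b) (hbc : b < c) (hx : x < 1) :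
    x * (1 - x) * (α * (α - 1) * ∫ s in (0:ℝ)..1,
        (s ^ (b - 1) * (1 - s) ^ (c - b - 1) * s * s) * (1 - x * s) ^ (α - 2))
      + (c - (b - α + 1) * x) * (-α * ∫ s in (0:ℝ)..1,
        (s ^ (b - 1) * (1 - s) ^ (c - b - 1) * s) * (1 - x * s) ^ (α - 1))
      + α * b * (∫ s in (0:ℝ)..1,
        (s ^ (b - 1) * (1 - s) ^ (c - b - 1)) * (1 - x * s) ^ α) = 0 := by
  have hw := bw_integrable hb (sub_pos.2 hbc)
  have hw1 : IntervalIntegrable (fun s : ℝ => s ^ (b - 1) * (1 - s) ^ (c - b - 1) * s) volume 0 1 :=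
    hw.mul_continuousOn (by fun_prop)
  have hw2 : IntervalIntegrable (fun s : ℝ => s ^ (b - 1) * (1 - s) ^ (c - b - 1) * s * s) volume 0 1 :=
    hw1.mul_continuousOn (by fun_prop)
  have i0 := J_integrable hw hx α
  have i1 := J_integrable hw1 hx (α - 1)
  have i2 := J_integrable hw2 hx (α - 2)
  have hq : 0 < c - b := sub_pos.2 hbc
  rw [← intervalIntegral.integral_const_mul, ← intervalIntegral.integral_const_mul,
    ← intervalIntegral.integral_const_mul, ← intervalIntegral.integral_const_mul,
    ← intervalIntegral.integral_const_mul,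
    ← intervalIntegral.integral_add ((i2.const_mul _).const_mul _) ((i1.const_mul _).const_mul _),
    ← intervalIntegral.integral_add
      (((i2.const_mul _).const_mul _).add ((i1.const_mul _).const_mul _)) (i0.const_mul _)]
  have hF := intervalIntegral.integral_eq_sub_of_hasDerivAt_of_le (a := 0) (b := 1) zero_le_one
    (f := fun s : ℝ => α * (s ^ b * (1 - s) ^ (c - b) * (1 - x * s) ^ (α - 1))) ?_ ?_
    ((((i2.const_mul (α * (α - 1))).const_mul (x * (1 - x))).add
      ((i1.const_mul (-α)).const_mul (c - (b - α + 1) * x))).add (i0.const_mul (α * b)))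
  · rw [hF]
    simp [Real.zero_rpow hb.ne', Real.zero_rpow hq.ne']
  · have h1 := J_contOn hx (α - 1)
    rw [uIcc_of_le zero_le_one] at h1
    have h2 : ContinuousOn (fun s : ℝ => s ^ b) (Icc 0 1) :=
      continuousOn_id.rpow_const (fun _ _ => Or.inr hb.le)
    have h3 : ContinuousOn (fun s : ℝ => (1 - s) ^ (c - b)) (Icc 0 1) :=
      ContinuousOn.rpow_const (by fun_prop) (fun _ _ => Or.inr hq.le)
    exact continuousOn_const.mul ((h2.mul h3).mul h1)
  · intro s hs
    have hs0 := hs.1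
    have hs1 : 0 < 1 - s := sub_pos.2 hs.2
    have hpos := one_sub_mul_pos' hx hs.1.le hs.2.le
    have d1 : HasDerivAt (fun s : ℝ => s ^ b) (b * s ^ (b - 1)) s :=
      Real.hasDerivAt_rpow_const (Or.inl hs0.ne')
    have d2 : HasDerivAt (fun s : ℝ => (1 - s) ^ (c - b)) _ s :=
      (((hasDerivAt_id s).const_sub 1)).rpow_const (Or.inl hs1.ne')
    have d3' : HasDerivAt (fun s : ℝ => 1 - x * s) (-x) s := by
      simpa using ((hasDerivAt_id s).const_mul x).const_sub 1
    have d3 := d3'.rpow_const (p := α - 1) (Or.inl hpos.ne')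
    have d := ((d1.mul d2).mul d3).const_mul α
    convert! d using 1
    have e1 : s ^ b = s ^ (b - 1) * s := by
      rw [← Real.rpow_add_one hs0.ne']; ring_nf
    have e2 : (1 - s) ^ (c - b) = (1 - s) ^ (c - b - 1) * (1 - s) := by
      rw [← Real.rpow_add_one hs1.ne']; ring_nf
    have e3 : (1 - x * s) ^ α = (1 - x * s) ^ (α - 2) * (1 - x * s) * (1 - x * s) := by
      rw [← Real.rpow_add_one hpos.ne', ← Real.rpow_add_one hpos.ne']; ring_nf
    have e4 : (1 - x * s) ^ (α - 1) = (1 - x * s) ^ (α - 2) * (1 - x * s) := by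
      rw [← Real.rpow_add_one hpos.ne']; ring_nf
    have e5 : α - 1 - 1 = α - 2 := by ring
    simp only [id, Pi.mul_apply, e5]
    rw [e1, e2, e3, e4]
    ring



lemma coef_sum (t : ℝ) : aCoef t + bCoef t = t := by unfold aCoef bCoef; ring

lemma coef_prod (t : ℝ) : aCoef t * bCoef t = -2 := by
  unfold aCoef bCoef
  have := Real.sq_sqrt (show 0 ≤ t ^ 2 + 8 by positivity)
  linear_combination -this / 4

lemma coef_facts {t : ℝ} (ht : 1 < t) :
    -1 < aCoef t ∧ aCoef t < 0 ∧ 0 < bCoef t ∧ bCoef t < t + 1 := by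
  have h1 : Real.sqrt (t ^ 2 + 8) < t + 2 := by
    rw [Real.sqrt_lt' (by linarith)]
    nlinarith
  have h2 : t < Real.sqrt (t ^ 2 + 8) := Real.lt_sqrt_of_sq_lt (by linarith)
  unfold aCoef bCoef
  refine ⟨?_, ?_, ?_, ?_⟩ <;> linarith

lemma Fhyp_eq {t : ℝ} (ht : 1 < t) (x : ℝ) : Fhyp t x =
    Real.Gamma (t + 1) / (Real.Gamma (bCoef t) * Real.Gamma (t + 1 - bCoef t)) *
      ∫ s in (0:ℝ)..1, s ^ (bCoef t - 1) * (1 - s) ^ (t + 1 - bCoef t - 1) * (1 - x * s) ^ (-aCoef t) := by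
  obtain ⟨-, -, h3, h4⟩ := coef_facts ht
  unfold Fhyp hyper
  rw [if_pos ⟨h4, h3⟩]

lemma Fhyp_one (x : ℝ) : Fhyp 1 x = 1 - x := by
  have hs : Real.sqrt (1 ^ 2 + 8) = 3 := by
    rw [show (1:ℝ) ^ 2 + 8 = 3 ^ 2 by norm_num]
    exact Real.sqrt_sq (by norm_num)
  have ha : aCoef 1 = -1 := by unfold aCoef; rw [hs]; norm_num
  have hb : bCoef 1 = 2 := by unfold bCoef; rw [hs]; norm_num
  unfold Fhyp hyper
  rw [ha, hb, if_neg (by norm_num)]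
  rw [tsum_eq_sum (s := Finset.range 2)]
  · simp [Finset.sum_range_succ, poch, ascPochhammer_one]
    ring
  · intro k hk
    have hk2 : 1 < k := by simpa using hk
    have : poch (-1) k = 0 := by
      unfold poch
      have := ascPochhammer_eval_neg_coe_nat_of_lt (R := ℝ) hk2
      simpa using this
    rw [this]; simp

/-- Summary of the regularity, sign and ODE properties of `Fhyp t`. -/
structure HProps (t : ℝ) (F1 F2 : ℝ → ℝ) : Prop where
  d1 : ∀ x < 1, HasDerivAt (Fhyp t) (F1 x) x
  d2 : ∀ x < 1, HasDerivAt F1 (F2 x) x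
  pos : ∀ x < 1, 0 < Fhyp t x
  neg1 : ∀ x < 1, F1 x < 0
  neg2 : ∀ x < 1, F2 x ≤ 0
  anti2 : ∀ x y, x ≤ y → y < 1 → F2 y ≤ F2 x
  ode : ∀ x < 1, x * (1 - x) * F2 x + (t + 1) * (1 - x) * F1 x + 2 * Fhyp t x = 0
  zero : Fhyp t 0 = 1

lemma J_pos {p q x β : ℝ} (hp : 0 < p) (hq : 0 < q) (hx : x < 1) (k : ℕ) :
    0 < ∫ s in (0:ℝ)..1, (s ^ (p - 1) * (1 - s) ^ (q - 1) * s ^ k) * (1 - x * s) ^ β := by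
  have hw : IntervalIntegrable (fun s : ℝ => s ^ (p - 1) * (1 - s) ^ (q - 1) * s ^ k) volume 0 1 :=
    (bw_integrable hp hq).mul_continuousOn (by fun_prop)
  refine intervalIntegral.intervalIntegral_pos_of_pos_on (J_integrable hw hx β) ?_ one_pos
  intro s hs
  have h1 := hs.1
  have h2 : 0 < 1 - s := sub_pos.2 hs.2
  have h3 := one_sub_mul_pos' hx hs.1.le hs.2.le
  positivity

lemma exists_HProps {t : ℝ} (ht : 1 ≤ t) : ∃ F1 F2, HProps t F1 F2 := by
  rcases ht.eq_or_lt with rfl | ht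
  · have h : Fhyp 1 = fun x => 1 - x := funext Fhyp_one
    refine ⟨fun _ => -1, fun _ => 0, ?_, ?_, ?_, ?_, ?_, ?_, ?_, ?_⟩
    · intro x _; rw [h]; simpa using (hasDerivAt_id x).const_sub 1
    · intro x _; exact hasDerivAt_const _ _
    · intro x hx; rw [h]; simpa using hx
    · intro x _; norm_num
    · intro x _; norm_num
    · intros; norm_num
    · intro x _; rw [h]; ring
    · rw [h]; norm_num
  obtain ⟨ha1, ha0, hb, hbc⟩ := coef_facts ht
  have hsum := coef_sum t
  have hprod := coef_prod t
  have hF := Fhyp_eq ht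
  set b := bCoef t
  set α := -aCoef t with hα
  have hα0 : 0 < α := by linarith
  have hα1 : α < 1 := by linarith
  have hq : 0 < t + 1 - b := sub_pos.2 hbc
  set N := Real.Gamma (t + 1) / (Real.Gamma b * Real.Gamma (t + 1 - b)) with hN
  have hN0 : 0 < N := div_pos (Real.Gamma_pos_of_pos (by linarith))
    (mul_pos (Real.Gamma_pos_of_pos hb) (Real.Gamma_pos_of_pos hq))
  have hw := bw_integrable hb hq
  have hw1 : IntervalIntegrable (fun s : ℝ => s ^ (b - 1) * (1 - s) ^ (t + 1 - b - 1) * s) volume 0 1 :=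
    hw.mul_continuousOn (by fun_prop)
  have hw2 : IntervalIntegrable (fun s : ℝ => s ^ (b - 1) * (1 - s) ^ (t + 1 - b - 1) * s * s) volume 0 1 :=
    hw1.mul_continuousOn (by fun_prop)
  have hFf : Fhyp t = fun x => N * ∫ s in (0:ℝ)..1, s ^ (b - 1) * (1 - s) ^ (t + 1 - b - 1) * (1 - x * s) ^ α :=
    funext hF
  refine ⟨fun x => N * (-α * ∫ s in (0:ℝ)..1,
        (s ^ (b - 1) * (1 - s) ^ (t + 1 - b - 1) * s) * (1 - x * s) ^ (α - 1)),
    fun x => N * (-α * (-(α - 1) * ∫ s in (0:ℝ)..1,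
        (s ^ (b - 1) * (1 - s) ^ (t + 1 - b - 1) * s * s) * (1 - x * s) ^ (α - 1 - 1))),
      ?_, ?_, ?_, ?_, ?_, ?_, ?_, ?_⟩
  · intro x hx
    rw [hFf]
    exact (J_hasDerivAt hw hx α).const_mul N
  · intro x hx
    exact ((J_hasDerivAt hw1 hx (α - 1)).const_mul (-α)).const_mul N
  · intro x hx
    rw [hF]
    have := J_pos (β := α) hb hq hx 0
    simp only [pow_zero, mul_one] at this
    positivity
  · intro x hx
    have := J_pos (β := α - 1) hb hq hx 1
    simp only [pow_one] at this
    have h2 := mul_pos hN0 (mul_pos hα0 this)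
    linarith
  · intro x hx
    have := J_pos (β := α - 1 - 1) hb hq hx 2
    simp only [pow_two, ← mul_assoc] at this
    have h2 := mul_pos hN0 (mul_pos (mul_pos hα0 (sub_pos.2 hα1)) this)
    linarith
  · intro x y hxy hy
    have : ∫ s in (0:ℝ)..1,
        (s ^ (b - 1) * (1 - s) ^ (t + 1 - b - 1) * s * s) * (1 - x * s) ^ (α - 1 - 1) ≤
        ∫ s in (0:ℝ)..1,
        (s ^ (b - 1) * (1 - s) ^ (t + 1 - b - 1) * s * s) * (1 - y * s) ^ (α - 1 - 1) := by
      refine intervalIntegral.integral_mono_on zero_le_one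
        (J_integrable hw2 (hxy.trans_lt hy) _) (J_integrable hw2 hy _) ?_
      intro s hs
      have h1 := hs.1
      have h2 : 0 ≤ 1 - s := sub_nonneg.2 hs.2
      have h3 := one_sub_mul_pos' hy hs.1 hs.2
      have h4 : 1 - y * s ≤ 1 - x * s := by nlinarith
      refine mul_le_mul_of_nonneg_left ?_ (by positivity)
      exact Real.rpow_le_rpow_of_nonpos h3 h4 (by linarith)
    have h2 := mul_le_mul_of_nonneg_left this
      (mul_pos hN0 (mul_pos hα0 (sub_pos.2 hα1))).le
    linarith
  · intro x hx
    have h := J_ode (α := α) hb hbc hx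
    rw [hF]
    have e : α - 1 - 1 = α - 2 := by ring
    have e2 : b - α + 1 = t + 1 := by rw [hα]; linarith
    have e3 : α * b = 2 := by rw [hα]; linarith
    simp only [e]
    rw [e2, e3] at h
    linear_combination N * h
  · rw [hF]
    simp only [zero_mul, sub_zero, Real.one_rpow, mul_one]
    rw [bw_integral hb hq, hN]
    have g1 := (Real.Gamma_pos_of_pos hb).ne'
    have g2 := (Real.Gamma_pos_of_pos hq).ne'
    have g3 := (Real.Gamma_pos_of_pos (show 0 < t + 1 by linarith)).ne'
    rw [show b + (t + 1 - b) = t + 1 by ring]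
    field_simp

lemma Fhyp_cont_one {t : ℝ} (ht : 1 ≤ t) : Filter.Tendsto (Fhyp t) (nhdsWithin 1 (Iio 1)) (nhds (Fhyp t 1)) := by
  rcases ht.eq_or_lt with rfl | ht
  · have h : Fhyp 1 = fun x => 1 - x := funext Fhyp_one
    rw [h]
    exact (Continuous.tendsto (by fun_prop) _).mono_left nhdsWithin_le_nhds
  obtain ⟨ha1, ha0, hb, hbc⟩ := coef_facts ht
  have hq : 0 < t + 1 - bCoef t := sub_pos.2 hbc
  have hFf := funext (Fhyp_eq ht)
  have hw := bw_integrable hb hq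
  rw [hFf]
  refine Filter.Tendsto.const_mul _ ?_
  refine intervalIntegral.tendsto_integral_filter_of_dominated_convergence
    (fun s => |s ^ (bCoef t - 1) * (1 - s) ^ (t + 1 - bCoef t - 1)|) ?_ ?_ hw.abs ?_
  · filter_upwards [self_mem_nhdsWithin] with x hx
    exact (J_integrable hw hx _).def'.aestronglyMeasurable
  · have : Ioo (0:ℝ) 1 ∈ nhdsWithin 1 (Iio 1) := Ioo_mem_nhdsLT one_pos
    filter_upwards [this] with x hx
    refine Filter.Eventually.of_forall fun s hs => ?_
    rw [uIoc_of_le zero_le_one] at hs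
    have h3 := one_sub_mul_pos' hx.2 hs.1.le hs.2
    rw [norm_mul]
    refine mul_le_of_le_one_right (abs_nonneg _) ?_
    rw [Real.norm_eq_abs, abs_of_pos (Real.rpow_pos_of_pos h3 _)]
    exact Real.rpow_le_one h3.le (by nlinarith [hx.1, hs.1]) (by linarith)
  · refine Filter.Eventually.of_forall fun s hs => ?_
    refine Filter.Tendsto.const_mul _ ?_
    have : Continuous (fun x : ℝ => (1 - x * s) ^ (-aCoef t)) :=
      Continuous.rpow_const (by fun_prop) (fun _ => Or.inr (by linarith))
    exact (this.tendsto 1).mono_left nhdsWithin_le_nhds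



noncomputable def gC (t : ℝ) (k : ℕ) : ℝ :=
  ∏ j ∈ Finset.range k, (1 - 2 / (((j:ℝ) + 1) * ((j:ℝ) + 1 + t)))

noncomputable def dC (t : ℝ) : ℕ → ℝ
  | 0 => 1
  | k + 1 => gC t (k + 1) - gC t k

lemma gC_zero (t : ℝ) : gC t 0 = 1 := by simp [gC]

lemma gC_succ (t : ℝ) (k : ℕ) :
    gC t (k + 1) = gC t k * (1 - 2 / (((k:ℝ) + 1) * ((k:ℝ) + 1 + t))) := by
  simp [gC, Finset.prod_range_succ]

lemma dC_rec {t : ℝ} (ht : 1 ≤ t) (k : ℕ) :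
    dC t (k + 1) * (((k:ℝ) + 1) * ((k:ℝ) + 1 + t)) = dC t k * ((k:ℝ) ^ 2 + t * k - 2) := by
  cases k with
  | zero =>
    simp only [dC, gC_succ, gC_zero]
    have : (1:ℝ) + t ≠ 0 := by linarith
    push_cast
    field_simp
    ring_nf
  | succ k =>
    simp only [dC]
    rw [gC_succ t (k + 1), gC_succ t k]
    have hk : (0:ℝ) ≤ k := Nat.cast_nonneg k
    have h1 : (k:ℝ) + 1 ≠ 0 := by linarith
    have h2 : (k:ℝ) + 1 + t ≠ 0 := by linarith
    have h3 : (k:ℝ) + 1 + 1 ≠ 0 := by linarith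
    have h4 : (k:ℝ) + 1 + 1 + t ≠ 0 := by linarith
    push_cast
    field_simp
    ring

lemma choose_rec (α : ℝ) (k : ℕ) :
    Ring.choose α (k + 1) * ((k:ℝ) + 1) = Ring.choose α k * (α - k) := by
  have h1 := Ring.descPochhammer_eq_factorial_smul_choose α (k + 1)
  have h2 := Ring.descPochhammer_eq_factorial_smul_choose α k
  rw [descPochhammer_succ_right, Polynomial.smeval_mul, h2] at h1
  simp only [Polynomial.smeval_sub, Polynomial.smeval_X, Polynomial.smeval_natCast, nsmul_eq_mul, pow_one, pow_zero, mul_one, Nat.factorial_succ] at h1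
  push_cast at h1
  have : ((Nat.factorial k : ℕ) : ℝ) ≠ 0 := by positivity
  apply mul_left_cancel₀ this
  linear_combination -h1

lemma moment {b c : ℝ} (hb : 0 < b) (hbc : b < c) (k : ℕ) :
    ∫ s in (0:ℝ)..1, s ^ (b - 1) * (1 - s) ^ (c - b - 1) * s ^ k
      = Real.Gamma (b + k) * Real.Gamma (c - b) / Real.Gamma (c + k) := by
  have h := bw_integral (p := b + k) (q := c - b) (by positivity) (sub_pos.2 hbc)
  rw [show b + k + (c - b) = c + k by ring] at h
  rw [← h, intervalIntegral.integral_of_le zero_le_one, intervalIntegral.integral_of_le zero_le_one]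
  refine setIntegral_congr_fun measurableSet_Ioc fun s hs => ?_
  have : s ^ (b + k - 1) = s ^ (b - 1) * s ^ k := by
    rw [show b + k - 1 = b - 1 + k by ring, Real.rpow_add_natCast hs.1.ne']
  simp only [this]
  ring

lemma binom_hasSum (α : ℝ) {y : ℝ} (hy : |y| < 1) :
    HasSum (fun k : ℕ => Ring.choose α k * y ^ k) ((1 + y) ^ α) := by
  have h := (Real.one_add_rpow_hasFPowerSeriesOnBall_zero (a := α)).hasSum (y := y) (by
    simpa [enorm_eq_nnnorm, ← NNReal.coe_lt_coe] using hy)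
  rw [zero_add] at h
  refine h.congr_fun ?_ |> id
  intro k
  rw [binomialSeries_apply]
  simp

lemma binom_summable (α : ℝ) {y : ℝ} (h0 : 0 ≤ y) (hy : y < 1) :
    Summable (fun k : ℕ => |Ring.choose α k| * y ^ k) := by
  have h := (binom_hasSum α (y := y) (by rwa [abs_of_nonneg h0])).summable.abs
  refine h.congr fun k => ?_
  rw [abs_mul, abs_of_nonneg (pow_nonneg h0 k)]

lemma Fhyp_hasSum {t x : ℝ} (ht : 1 ≤ t) (h0 : 0 ≤ x) (hx : x < 1) :
    HasSum (fun k => dC t k * x ^ k) (Fhyp t x) := by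
  rcases ht.eq_or_lt with rfl | ht
  · rw [Fhyp_one]
    have hg : ∀ k, gC 1 (k + 1) = 0 := by
      intro k
      induction k with
      | zero => rw [gC_succ]; norm_num
      | succ k ih => rw [gC_succ, ih, zero_mul]
    have : ∀ k ∉ Finset.range 2, dC 1 k * x ^ k = 0 := by
      intro k hk
      match k, hk with
      | 0, hk => simp at hk
      | 1, hk => simp at hk
      | k + 2, _ => simp [dC, hg]
    convert (hasSum_sum_of_ne_finset_zero this : HasSum _ _) using 1
    simp only [Finset.sum_range_succ, dC, hg, gC_zero]
    simp
    ring
  obtain ⟨ha1, ha0, hb, hbc⟩ := coef_facts ht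
  have hsum := coef_sum t
  have hprod := coef_prod t
  have hF := Fhyp_eq ht x
  set b := bCoef t
  set α := -aCoef t with hα
  have hq : 0 < t + 1 - b := sub_pos.2 hbc
  set N := Real.Gamma (t + 1) / (Real.Gamma b * Real.Gamma (t + 1 - b)) with hN
  have hw := bw_integrable hb hq
  have hsm := binom_summable α h0 hx
  have key := intervalIntegral.hasSum_integral_of_dominated_convergence (μ := volume) (a := 0) (b := 1)
    (F := fun k s => (s ^ (b - 1) * (1 - s) ^ (t + 1 - b - 1)) * (Ring.choose α k * (-(x * s)) ^ k))
    (f := fun s => s ^ (b - 1) * (1 - s) ^ (t + 1 - b - 1) * (1 - x * s) ^ α)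
    (fun k s => |s ^ (b - 1) * (1 - s) ^ (t + 1 - b - 1)| * (|Ring.choose α k| * x ^ k)) ?_ ?_ ?_ ?_ ?_
  · have key2 := key.mul_left N
    rw [← hF] at key2
    refine key2.congr_fun ?_ |> id
    intro k
    have e1 : ∫ s in (0:ℝ)..1, (s ^ (b - 1) * (1 - s) ^ (t + 1 - b - 1)) *
        (Ring.choose α k * (-(x * s)) ^ k) = (Ring.choose α k * (-x) ^ k) *
          (Real.Gamma (b + k) * Real.Gamma (t + 1 - b) / Real.Gamma (t + 1 + k)) := by
      rw [← moment hb hbc k, ← intervalIntegral.integral_const_mul]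
      congr 1
      ext s
      rw [← neg_mul, mul_pow]
      ring
    rw [e1]
    have g1 := (Real.Gamma_pos_of_pos hb).ne'
    have g2 := (Real.Gamma_pos_of_pos hq).ne'
    have g3 := (Real.Gamma_pos_of_pos (show 0 < t + 1 by linarith)).ne'
    have e2 : ∀ k : ℕ, dC t k = N * (Ring.choose α k * (-1) ^ k *
          (Real.Gamma (b + k) * Real.Gamma (t + 1 - b) / Real.Gamma (t + 1 + k))) := by
      intro k
      induction k with
      | zero =>
        simp only [dC, Nat.cast_zero, add_zero, pow_zero, mul_one, Ring.choose_zero_right, one_mul, hN]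
        field_simp
      | succ k ih =>
        have hk : (0:ℝ) ≤ k := Nat.cast_nonneg k
        have h1 : (k:ℝ) + 1 ≠ 0 := by linarith
        have h2 : (k:ℝ) + 1 + t ≠ 0 := by linarith
        have r1 := dC_rec ht.le k
        have r2 := choose_rec α k
        have r3 : Real.Gamma (b + (k + 1 : ℕ)) = (b + k) * Real.Gamma (b + k) := by
          rw [← Real.Gamma_add_one (by positivity)]; push_cast; ring_nf
        have r4 : Real.Gamma (t + 1 + (k + 1 : ℕ)) = (t + 1 + k) * Real.Gamma (t + 1 + k) := by
          rw [← Real.Gamma_add_one (by positivity)]; push_cast; ring_nf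
        have g4 := (Real.Gamma_pos_of_pos (show 0 < t + 1 + k by linarith)).ne'
        have h5 : t + 1 + (k:ℝ) ≠ 0 := by linarith
        apply mul_right_cancel₀ (mul_ne_zero h1 h2)
        rw [r1, ih, r3, r4]
        have e6 : (k:ℝ) ^ 2 + t * k - 2 = -(α - k) * (b + k) := by
          rw [hα]; linear_combination -hprod - (k:ℝ) * hsum
        rw [e6, pow_succ]
        have e7 : (b + k) * Real.Gamma (b + k) * Real.Gamma (t + 1 - b) /
            ((t + 1 + k) * Real.Gamma (t + 1 + k)) * (k + 1 + t) =
            (b + k) * (Real.Gamma (b + k) * Real.Gamma (t + 1 - b) / Real.Gamma (t + 1 + k)) := by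
          field_simp
          ring
        linear_combination N * (-1) ^ k * ((b + k) * (Real.Gamma (b + k) *
          Real.Gamma (t + 1 - b) / Real.Gamma (t + 1 + k)) * r2 +
            Ring.choose α (k + 1) * (k + 1) * e7)
    rw [e2, neg_pow x k]
    ring
  · intro k
    exact (hw.mul_continuousOn (by fun_prop)).def'.aestronglyMeasurable
  · intro k
    refine Filter.Eventually.of_forall fun s hs => ?_
    rw [uIoc_of_le zero_le_one] at hs
    rw [norm_mul _ (Ring.choose α k * _), norm_mul (Ring.choose α k), norm_pow, norm_neg]
    simp only [Real.norm_eq_abs]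
    have : |x * s| ≤ x := by
      rw [abs_of_nonneg (mul_nonneg h0 hs.1.le)]
      exact mul_le_of_le_one_right h0 hs.2
    gcongr
  · refine Filter.Eventually.of_forall fun s hs => hsm.mul_left _
  · simp_rw [tsum_mul_left]
    exact hw.abs.mul_const _
  · refine Filter.Eventually.of_forall fun s hs => ?_
    rw [uIoc_of_le zero_le_one] at hs
    have : |(-(x * s))| < 1 := by
      rw [abs_neg, abs_of_nonneg (mul_nonneg h0 hs.1.le)]
      exact (mul_le_of_le_one_right h0 hs.2).trans_lt hx
    exact (binom_hasSum α this).mul_left _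



lemma fac_bounds {t : ℝ} (ht : 1 ≤ t) (j : ℕ) :
    0 ≤ 1 - 2 / (((j:ℝ) + 1) * ((j:ℝ) + 1 + t)) ∧ 1 - 2 / (((j:ℝ) + 1) * ((j:ℝ) + 1 + t)) ≤ 1 := by
  have hj : (0:ℝ) ≤ j := Nat.cast_nonneg j
  have h : 2 ≤ ((j:ℝ) + 1) * ((j:ℝ) + 1 + t) := by nlinarith
  constructor
  · rw [sub_nonneg, div_le_one (by linarith)]; exact h
  · have : 0 ≤ 2 / (((j:ℝ) + 1) * ((j:ℝ) + 1 + t)) := by positivity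
    linarith

lemma fac_mono {t s : ℝ} (ht : 1 ≤ t) (hts : t ≤ s) (j : ℕ) :
    1 - 2 / (((j:ℝ) + 1) * ((j:ℝ) + 1 + t)) ≤ 1 - 2 / (((j:ℝ) + 1) * ((j:ℝ) + 1 + s)) := by
  have hj : (0:ℝ) ≤ j := Nat.cast_nonneg j
  have h1 : 0 < (j:ℝ) + 1 + t := by linarith
  gcongr

lemma gC_nonneg {t : ℝ} (ht : 1 ≤ t) (k : ℕ) : 0 ≤ gC t k :=
  Finset.prod_nonneg fun j _ => (fac_bounds ht j).1

lemma gC_le_one {t : ℝ} (ht : 1 ≤ t) (k : ℕ) : gC t k ≤ 1 :=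
  Finset.prod_le_one (fun j _ => (fac_bounds ht j).1) fun j _ => (fac_bounds ht j).2

lemma gC_lower {t : ℝ} (ht : 1 ≤ t) (k : ℕ) :
    (1 - 2 / (1 + t)) * (((k:ℝ) + 3) / (3 * ((k:ℝ) + 1))) ≤ gC t (k + 1) := by
  have h0 : 0 ≤ 1 - 2 / (1 + t) := by simpa using (fac_bounds ht 0).1
  induction k with
  | zero => rw [gC_succ, gC_zero]; norm_num
  | succ k ih =>
    have hk : (0:ℝ) ≤ k := Nat.cast_nonneg k
    have h1 := fac_mono le_rfl ht (k + 1)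
    have h2 := (fac_bounds (le_refl (1:ℝ)) (k + 1)).1
    rw [gC_succ]
    refine le_trans (le_of_eq ?_) (mul_le_mul ih h1 h2 (gC_nonneg ht _))
    rw [mul_assoc]
    congr 1
    push_cast
    field_simp
    ring

lemma gC_ratio {t s : ℝ} (ht : 1 ≤ t) (hts : t ≤ s) (k : ℕ) :
    (1 - 2 / (1 + s)) * gC t (k + 1) ≤ (1 - 2 / (1 + t)) * gC s (k + 1) := by
  have h0 : 0 ≤ 1 - 2 / (1 + s) := by simpa using (fac_bounds (ht.trans hts) 0).1
  induction k with
  | zero =>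
    rw [gC_succ, gC_succ, gC_zero, gC_zero]
    apply le_of_eq
    norm_num
    ring
  | succ k ih =>
    rw [gC_succ t (k + 1), gC_succ s (k + 1), ← mul_assoc, ← mul_assoc]
    refine mul_le_mul ih (fac_mono ht hts _) (fac_bounds ht _).1 ?_
    exact (mul_nonneg h0 (gC_nonneg ht _)).trans ih

lemma gC_diff {t s : ℝ} (ht : 1 ≤ t) (hts : t < s) (k : ℕ) :
    (2 / (1 + t) - 2 / (1 + s)) / 3 ≤ gC s (k + 1) - gC t (k + 1) := by
  have hs : 1 < s := ht.trans_lt hts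
  have h0 : 0 < 1 - 2 / (1 + s) := by
    rw [sub_pos, div_lt_one (by linarith)]; linarith
  have h1 : 2 / (1 + s) ≤ 2 / (1 + t) := by gcongr
  have h2 := gC_ratio ht hts.le k
  have h3 := gC_lower hs.le k
  have hk : (0:ℝ) ≤ k := Nat.cast_nonneg k
  have h4 : (1:ℝ) / 3 ≤ ((k:ℝ) + 3) / (3 * ((k:ℝ) + 1)) := by
    rw [div_le_div_iff₀ (by norm_num) (by positivity)]; linarith
  have h5 : (1 - 2 / (1 + s)) / 3 ≤ gC s (k + 1) := by nlinarith
  have h6 := mul_le_mul_of_nonneg_left h5 (sub_nonneg.2 h1)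
  refine le_of_mul_le_mul_left ?_ h0
  linarith

lemma dC_partial (t x : ℝ) (K : ℕ) :
    ∑ k ∈ Finset.range (K + 1), dC t k * x ^ k
      = (1 - x) * ∑ k ∈ Finset.range K, gC t k * x ^ k + gC t K * x ^ K := by
  induction K with
  | zero => simp [dC, gC_zero]
  | succ K ih =>
    rw [Finset.sum_range_succ, ih, Finset.sum_range_succ (fun k => gC t k * x ^ k)]
    simp only [dC]
    ring

lemma avg_lower {Δ : ℕ → ℝ} {η x : ℝ} (h0 : Δ 0 = 0) (h : ∀ k, η ≤ Δ (k + 1))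
    (hx0 : 0 ≤ x) (hx1 : x ≤ 1) (K : ℕ) :
    η * (x - x ^ (K + 1)) ≤ (1 - x) * ∑ k ∈ Finset.range (K + 1), Δ k * x ^ k := by
  induction K with
  | zero => simp [h0]
  | succ K ih =>
    rw [Finset.sum_range_succ, mul_add]
    have := mul_le_mul_of_nonneg_left (h K)
      (mul_nonneg (sub_nonneg.2 hx1) (pow_nonneg hx0 (K + 1)))
    calc η * (x - x ^ (K + 1 + 1)) = η * (x - x ^ (K + 1)) + (1 - x) * x ^ (K + 1) * η := by ring
      _ ≤ _ := by linarith

lemma Fhyp_diff_lt {t s x η : ℝ} (ht : 1 ≤ t) (hs : 1 ≤ s) (hx0 : 0 ≤ x) (hx1 : x < 1)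
    (h : ∀ k, η ≤ gC s (k + 1) - gC t (k + 1)) : η * x ≤ Fhyp s x - Fhyp t x := by
  have hS := (Fhyp_hasSum hs hx0 hx1).sub (Fhyp_hasSum ht hx0 hx1)
  have hT := (Filter.tendsto_add_atTop_iff_nat 2).2 hS.tendsto_sum_nat
  refine ge_of_tendsto' hT fun K => ?_
  rw [Finset.sum_sub_distrib, dC_partial, dC_partial]
  have h1 := avg_lower (Δ := fun k => gC s k - gC t k) (by simp [gC_zero]) h hx0 hx1.le K
  have h2 := mul_le_mul_of_nonneg_right (h K) (pow_nonneg hx0 (K + 1))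
  simp only [sub_mul, Finset.sum_sub_distrib] at h1 h2
  linarith

lemma Fhyp_diff {t s x η : ℝ} (ht : 1 ≤ t) (hs : 1 ≤ s) (hx0 : 0 ≤ x) (hx1 : x ≤ 1)
    (h : ∀ k, η ≤ gC s (k + 1) - gC t (k + 1)) : η * x ≤ Fhyp s x - Fhyp t x := by
  rcases hx1.eq_or_lt with rfl | hx1
  · have hl : Filter.Tendsto (fun x : ℝ => η * x) (nhdsWithin 1 (Iio 1)) (nhds (η * 1)) :=
      (Continuous.tendsto (by fun_prop) _).mono_left nhdsWithin_le_nhds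
    refine le_of_tendsto_of_tendsto hl ((Fhyp_cont_one hs).sub (Fhyp_cont_one ht)) ?_
    have : Ioo (0:ℝ) 1 ∈ nhdsWithin 1 (Iio 1) := Ioo_mem_nhdsLT one_pos
    filter_upwards [this] with x hx
    exact Fhyp_diff_lt ht hs hx.1.le hx.2 h
  · exact Fhyp_diff_lt ht hs hx0 hx1 h

lemma part1a (x : ℝ) (hx : x ∈ Ioc (0:ℝ) 1) : StrictMonoOn (fun t : ℝ => Fhyp t x) (Ici 1) := by
  intro t ht s hs hts
  have ht' : 1 ≤ t := ht
  have h := Fhyp_diff ht hs hx.1.le hx.2 (gC_diff ht hts)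
  have h1 : 2 / (1 + s) < 2 / (1 + t) := by gcongr
  have h2 : 0 < (2 / (1 + t) - 2 / (1 + s)) / 3 * x := mul_pos (by linarith) hx.1
  show Fhyp t x < Fhyp s x
  linarith

lemma gC_lip {t s : ℝ} (ht : 1 ≤ t) (hs : 1 ≤ s) (k : ℕ) :
    |gC s k - gC t k| ≤ ∑ j ∈ Finset.range k,
      2 * |s - t| / (((j:ℝ) + 1) * ((j:ℝ) + 1 + t) * ((j:ℝ) + 1 + s)) := by
  induction k with
  | zero => simp [gC_zero]
  | succ k ih =>
    rw [Finset.sum_range_succ, gC_succ, gC_succ]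
    have hk : (0:ℝ) ≤ k := Nat.cast_nonneg k
    have e : 2 * |s - t| / (((k:ℝ) + 1) * ((k:ℝ) + 1 + t) * ((k:ℝ) + 1 + s)) =
        |(1 - 2 / (((k:ℝ) + 1) * ((k:ℝ) + 1 + s))) - (1 - 2 / (((k:ℝ) + 1) * ((k:ℝ) + 1 + t)))| := by
      have h1 : 0 < (k:ℝ) + 1 + t := by linarith
      have h2 : 0 < (k:ℝ) + 1 + s := by linarith
      rw [show (1 - 2 / (((k:ℝ) + 1) * ((k:ℝ) + 1 + s))) - (1 - 2 / (((k:ℝ) + 1) * ((k:ℝ) + 1 + t))) =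
        2 * (s - t) / (((k:ℝ) + 1) * ((k:ℝ) + 1 + t) * ((k:ℝ) + 1 + s)) by field_simp; ring]
      rw [abs_div, abs_mul, abs_two, abs_of_pos (show 0 < ((k:ℝ) + 1) * ((k:ℝ) + 1 + t) * ((k:ℝ) + 1 + s) by positivity)]
    rw [e]
    obtain ⟨a0, a1⟩ := fac_bounds hs k
    set A := 1 - 2 / (((k:ℝ) + 1) * ((k:ℝ) + 1 + s))
    set B := 1 - 2 / (((k:ℝ) + 1) * ((k:ℝ) + 1 + t))
    have g0 := gC_nonneg ht k
    have g1 := gC_le_one ht k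
    calc |gC s k * A - gC t k * B| = |(gC s k - gC t k) * A + gC t k * (A - B)| := by ring_nf
      _ ≤ |(gC s k - gC t k) * A| + |gC t k * (A - B)| := abs_add_le _ _
      _ = |gC s k - gC t k| * A + gC t k * |A - B| := by
        rw [abs_mul, abs_mul, abs_of_nonneg a0, abs_of_nonneg g0]
      _ ≤ |gC s k - gC t k| * 1 + 1 * |A - B| := by gcongr
      _ ≤ _ := by linarith

lemma harm_sum (n k : ℕ) :
    ∑ j ∈ Finset.range k, (1 / ((j:ℝ) + 1) - 1 / ((j:ℝ) + 1 + n)) ≤ 1 + Real.log n := by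
  have h1 : ∑ i ∈ Finset.range n, 1 / ((i:ℝ) + 1) ≤ 1 + Real.log n := by
    refine le_trans (le_of_eq ?_) (harmonic_le_one_add_log n)
    rw [harmonic]
    push_cast
    simp
  have h2 : ∑ i ∈ Finset.range k, 1 / ((i:ℝ) + 1) ≤ ∑ i ∈ Finset.range (n + k), 1 / ((i:ℝ) + 1) := by
    refine Finset.sum_le_sum_of_subset_of_nonneg (Finset.range_mono (by omega)) ?_
    intros; positivity
  rw [Finset.sum_range_add] at h2
  have h3 : ∑ j ∈ Finset.range k, 1 / ((j:ℝ) + 1 + n) =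
      ∑ j ∈ Finset.range k, 1 / (((n + j : ℕ) : ℝ) + 1) := by
    refine Finset.sum_congr rfl fun j _ => ?_
    push_cast
    ring_nf
  rw [Finset.sum_sub_distrib, h3]
  linarith

lemma part4 : ∃ C : ℝ, 0 < C ∧ ∀ n : ℕ, 2 ≤ n → ∀ x ∈ Icc (0:ℝ) 1,
      |deriv (fun t : ℝ => Fhyp t x) n| ≤ C * Real.log n / (n : ℝ) ^ 2 := by
  refine ⟨6, by norm_num, fun n hn x hx => ?_⟩
  have hn' : (2:ℝ) ≤ n := by exact_mod_cast hn
  have hlog : 1 / 2 ≤ Real.log n := by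
    have h1 := Real.log_two_gt_d9
    have h2 := Real.log_le_log (by norm_num) hn'
    linarith
  have hL : ∀ s : ℝ, (n:ℝ) - 1 ≤ s → ∀ k, |gC s k - gC n k| ≤ 6 * Real.log n / (n:ℝ) ^ 2 * |s - n| := by
    intro s hs k
    refine (gC_lip (by linarith) (by linarith) k).trans ?_
    have hb : ∀ j ∈ Finset.range k,
        2 * |s - n| / (((j:ℝ) + 1) * ((j:ℝ) + 1 + n) * ((j:ℝ) + 1 + s)) ≤
        2 * |s - n| / (n:ℝ) ^ 2 * (1 / ((j:ℝ) + 1) - 1 / ((j:ℝ) + 1 + n)) := by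
      intro j _
      have hj : (0:ℝ) ≤ j := Nat.cast_nonneg j
      have e : 2 * |s - n| / (n:ℝ) ^ 2 * (1 / ((j:ℝ) + 1) - 1 / ((j:ℝ) + 1 + n)) =
          2 * |s - n| / (((j:ℝ) + 1) * ((j:ℝ) + 1 + n) * n) := by
        field_simp
        ring
      rw [e]
      gcongr
      linarith
    refine (Finset.sum_le_sum hb).trans ?_
    rw [← Finset.mul_sum]
    calc 2 * |s - n| / (n:ℝ) ^ 2 * _ ≤ 2 * |s - n| / (n:ℝ) ^ 2 * (1 + Real.log n) := by
          gcongr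
          exact harm_sum n k
      _ ≤ 2 * |s - n| / (n:ℝ) ^ 2 * (3 * Real.log n) := by
          gcongr
          linarith
      _ = _ := by ring
  have hK : 0 ≤ 6 * Real.log n / (n:ℝ) ^ 2 := by positivity
  rw [← Real.norm_eq_abs]
  refine norm_deriv_le_of_lip' hK ?_
  have : Ioi ((n:ℝ) - 1) ∈ nhds (n:ℝ) := Ioi_mem_nhds (by linarith)
  filter_upwards [this] with s hs
  have hs' : (n:ℝ) - 1 < s := hs
  rw [Real.norm_eq_abs, Real.norm_eq_abs]
  set M := 6 * Real.log n / (n:ℝ) ^ 2 * |s - n| with hM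
  have hM0 : 0 ≤ M := by positivity
  have A := Fhyp_diff (t := n) (s := s) (η := -M) (by linarith) (by linarith) hx.1 hx.2
    (fun k => (abs_le.1 (hL s hs'.le (k + 1))).1)
  have B := Fhyp_diff (t := s) (s := n) (η := -M) (by linarith) (by linarith) hx.1 hx.2
    (fun k => by linarith [(abs_le.1 (hL s hs'.le (k + 1))).2])
  have hMx : M * x ≤ M := mul_le_of_le_one_right hM0 hx.2
  rw [abs_le]
  constructor <;> linarith



lemma comparison {D D1 D2 : ℝ → ℝ} (hD : ∀ y, 0 ≤ y → HasDerivAt D (D1 y) y)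
    (hD1 : ∀ y, 0 ≤ y → HasDerivAt D1 (D2 y) y) (h0 : D 0 = 0) (h1 : 0 < D1 0)
    (h : ∀ y, 0 < y → 0 ≤ D y → D1 y = 0 → 0 < D2 y) : ∀ y, 0 < y → 0 < D y := by
  have hpos : ∀ y, 0 ≤ y → 0 < D1 y := by
    by_contra hcon
    push Not at hcon
    obtain ⟨Y, hY0, hY⟩ := hcon
    have hcont : ContinuousOn D1 (Icc 0 Y) := fun y hy => (hD1 y hy.1).continuousAt.continuousWithinAt
    have hclosed : IsClosed (Icc 0 Y ∩ D1 ⁻¹' Iic 0) :=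
      hcont.preimage_isClosed_of_isClosed isClosed_Icc isClosed_Iic
    have hcl : IsCompact (Icc 0 Y ∩ D1 ⁻¹' Iic 0) :=
      isCompact_Icc.of_isClosed_subset hclosed inter_subset_left
    obtain ⟨z, ⟨⟨hz0, hzY⟩, hz⟩, hmin⟩ := hcl.exists_isLeast ⟨Y, ⟨hY0, le_rfl⟩, hY⟩
    have hz' : D1 z ≤ 0 := hz
    have hzpos : 0 < z := by
      rcases hz0.eq_or_lt with rfl | h'
      · linarith
      · exact h'
    have hlt : ∀ u, 0 ≤ u → u < z → 0 < D1 u := by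
      intro u hu huz
      by_contra hc
      have := hmin ⟨⟨hu, by linarith⟩, (not_lt.1 hc : D1 u ≤ 0)⟩
      linarith
    have hev : ∀ᶠ u in nhdsWithin z (Iio z), 0 < D1 u := by
      have : Ioo 0 z ∈ nhdsWithin z (Iio z) := Ioo_mem_nhdsLT hzpos
      filter_upwards [this] with u hu
      exact hlt u hu.1.le hu.2
    have hge : 0 ≤ D1 z := by
      have ht : Filter.Tendsto D1 (nhdsWithin z (Iio z)) (nhds (D1 z)) :=
        (hD1 z hz0).continuousAt.tendsto.mono_left nhdsWithin_le_nhds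
      exact ge_of_tendsto ht (hev.mono fun u hu => hu.le)
    have hzero : D1 z = 0 := le_antisymm hz' hge
    have hDz : 0 ≤ D z := by
      have hm : MonotoneOn D (Icc 0 z) := by
        refine monotoneOn_of_deriv_nonneg (convex_Icc 0 z)
          (fun u hu => (hD u hu.1).continuousAt.continuousWithinAt) ?_ ?_
        · intro u hu
          rw [interior_Icc] at hu
          exact (hD u hu.1.le).differentiableAt.differentiableWithinAt
        · intro u hu
          rw [interior_Icc] at hu
          rw [(hD u hu.1.le).deriv]
          exact (hlt u hu.1.le hu.2).le
      have := hm (left_mem_Icc.2 hz0) (right_mem_Icc.2 hz0) hz0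
      rwa [h0] at this
    have hp := h z hzpos hDz hzero
    have hs := hasDerivAt_iff_tendsto_slope.1 (hD1 z hz0)
    have hs' : Filter.Tendsto (slope D1 z) (nhdsWithin z (Iio z)) (nhds (D2 z)) :=
      hs.mono_left (nhdsWithin_mono _ fun u hu => ne_of_lt hu)
    have : D2 z ≤ 0 := by
      refine le_of_tendsto hs' ?_
      filter_upwards [hev, self_mem_nhdsWithin] with u hu huz
      have huz' : u < z := huz
      rw [slope_def_field, hzero, sub_zero]
      exact div_nonpos_of_nonneg_of_nonpos hu.le (by linarith)
    linarith
  intro y hy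
  have hm : StrictMonoOn D (Icc 0 y) := by
    refine strictMonoOn_of_deriv_pos (convex_Icc 0 y)
      (fun z hz => (hD z hz.1).continuousAt.continuousWithinAt) ?_
    intro z hz
    rw [interior_Icc] at hz
    rw [(hD z hz.1.le).deriv]
    exact hpos z hz.1.le
  have := hm (left_mem_Icc.2 hy.le) (right_mem_Icc.2 hy.le) hy
  rwa [h0] at this

lemma HProps.antiF {t : ℝ} {F1 F2 : ℝ → ℝ} (h : HProps t F1 F2) : AntitoneOn (Fhyp t) (Iio 1) := by
  refine antitoneOn_of_deriv_nonpos (convex_Iio 1)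
    (fun x hx => (h.d1 x hx).continuousAt.continuousWithinAt) ?_ ?_
  · intro x hx
    rw [interior_Iio] at hx
    exact (h.d1 x hx).differentiableAt.differentiableWithinAt
  · intro x hx
    rw [interior_Iio] at hx
    rw [(h.d1 x hx).deriv]
    exact (h.neg1 x hx).le

lemma HProps.antiF1 {t : ℝ} {F1 F2 : ℝ → ℝ} (h : HProps t F1 F2) : AntitoneOn F1 (Iio 1) := by
  refine antitoneOn_of_deriv_nonpos (convex_Iio 1)
    (fun x hx => (h.d2 x hx).continuousAt.continuousWithinAt) ?_ ?_
  · intro x hx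
    rw [interior_Iio] at hx
    exact (h.d2 x hx).differentiableAt.differentiableWithinAt
  · intro x hx
    rw [interior_Iio] at hx
    rw [(h.d2 x hx).deriv]
    exact h.neg2 x hx

lemma HProps.F1_zero {t : ℝ} {F1 F2 : ℝ → ℝ} (h : HProps t F1 F2) (ht : 1 ≤ t) :
    F1 0 = -(2 / (t + 1)) := by
  have := h.ode 0 one_pos
  rw [h.zero] at this
  have h2 : t + 1 ≠ 0 := by linarith
  field_simp
  linarith

lemma hasDerivAt_comp_neg' {f : ℝ → ℝ} {f' y : ℝ} (h : HasDerivAt f f' (-y)) :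
    HasDerivAt (fun y => f (-y)) (-f') y := by
  have := h.comp y (hasDerivAt_neg y)
  simpa [Function.comp_def] using this

lemma neg_bounds {t s x : ℝ} (ht : 1 ≤ t) (hts : t < s) (hx : x < 0) :
    Fhyp s x < Fhyp t x ∧ Fhyp t x - Fhyp s x ≤ (s - t) * (-2 * x * Fhyp t x / (t + 1) ^ 2) := by
  obtain ⟨F1, F2, hF⟩ := exists_HProps ht
  obtain ⟨G1, G2, hG⟩ := exists_HProps (ht.trans hts.le)
  have hF10 := hF.F1_zero ht
  have hG10 := hG.F1_zero (ht.trans hts.le)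
  have hlt : ∀ y : ℝ, 0 ≤ y → -y < 1 := fun y hy => by linarith
  have dF : ∀ y, 0 ≤ y → HasDerivAt (fun y => Fhyp t (-y)) (-F1 (-y)) y :=
    fun y hy => hasDerivAt_comp_neg' (hF.d1 _ (hlt y hy))
  have dG : ∀ y, 0 ≤ y → HasDerivAt (fun y => Fhyp s (-y)) (-G1 (-y)) y :=
    fun y hy => hasDerivAt_comp_neg' (hG.d1 _ (hlt y hy))
  have dF1 : ∀ y, 0 ≤ y → HasDerivAt (fun y => -F1 (-y)) (F2 (-y)) y := fun y hy => by
    have h' := (hasDerivAt_comp_neg' (hF.d2 _ (hlt y hy))).neg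
    rw [neg_neg] at h'
    exact h'
  have dG1 : ∀ y, 0 ≤ y → HasDerivAt (fun y => -G1 (-y)) (G2 (-y)) y := fun y hy => by
    have h' := (hasDerivAt_comp_neg' (hG.d2 _ (hlt y hy))).neg
    rw [neg_neg] at h'
    exact h'
  have hinv : 2 / (s + 1) < 2 / (t + 1) := by gcongr
  constructor
  · have := comparison (D := fun y => Fhyp t (-y) - Fhyp s (-y))
      (D1 := fun y => -F1 (-y) - -G1 (-y)) (D2 := fun y => F2 (-y) - G2 (-y))
      (fun y hy => (dF y hy).sub (dG y hy)) (fun y hy => (dF1 y hy).sub (dG1 y hy))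
      (by simp [hF.zero, hG.zero]) (by simp [hF10, hG10]; linarith) ?_ (-x) (by linarith)
    · simp only [neg_neg] at this
      linarith
    · intro y hy hD hD1
      have o1 := hF.ode (-y) (by linarith)
      have o2 := hG.ode (-y) (by linarith)
      have n1 := hF.neg1 (-y) (by linarith)
      have e : G1 (-y) = F1 (-y) := by linarith
      rw [e] at o2
      have hyp : 0 < y * (1 + y) := by positivity
      refine pos_of_mul_pos_right (a := y * (1 + y)) ?_ hyp.le
      have : y * (1 + y) * (F2 (-y) - G2 (-y)) =
        2 * (Fhyp t (-y) - Fhyp s (-y)) + (s - t) * (1 + y) * (-F1 (-y)) := by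
        linear_combination -o1 + o2
      rw [this]
      have h3 : 0 < (s - t) * (1 + y) * (-F1 (-y)) :=
        mul_pos (mul_pos (by linarith) (by linarith)) (by linarith)
      linarith
  · set L := (s - t) * (2 / (t + 1) ^ 2) with hL
    have hL0 : 0 < L := mul_pos (by linarith) (by positivity)
    have hLs : (s - t) * (2 / (t + 1)) < L * (s + 1) := by
      rw [hL, mul_assoc]
      refine mul_lt_mul_of_pos_left ?_ (by linarith)
      rw [div_mul_eq_mul_div, div_lt_div_iff₀ (by linarith) (by positivity)]
      nlinarith [mul_pos (show 0 < t + 1 by linarith) (sub_pos.2 hts)]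
    have := comparison (D := fun y => L * (y * Fhyp t (-y)) - (Fhyp t (-y) - Fhyp s (-y)))
      (D1 := fun y => L * (1 * Fhyp t (-y) + y * -F1 (-y)) - (-F1 (-y) - -G1 (-y)))
      (D2 := fun y => L * ((1 * -F1 (-y)) + (1 * -F1 (-y) + y * F2 (-y))) - (F2 (-y) - G2 (-y)))
      (fun y hy => (((hasDerivAt_id y).mul (dF y hy)).const_mul L).sub ((dF y hy).sub (dG y hy)))
      (fun y hy => ((((dF y hy).const_mul 1).add ((hasDerivAt_id y).mul (dF1 y hy))).const_mul L).sub
        ((dF1 y hy).sub (dG1 y hy)))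
      (by simp [hF.zero, hG.zero]) ?_ ?_ (-x) (by linarith)
    · simp only [neg_neg] at this
      rw [hL] at this
      have e : (s - t) * (-2 * x * Fhyp t x / (t + 1) ^ 2) =
        (s - t) * (2 / (t + 1) ^ 2) * (-x * Fhyp t x) := by ring
      linarith
    · simp only [neg_zero, hF.zero, hF10, hG10]
      have e : 2 / (t + 1) - 2 / (s + 1) = (s - t) * (2 / (t + 1)) / (s + 1) := by
        have : t + 1 ≠ 0 := by linarith
        have : s + 1 ≠ 0 := by linarith
        field_simp
        ring
      have : (s - t) * (2 / (t + 1)) / (s + 1) < L := by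
        rw [div_lt_iff₀ (by linarith)]; exact hLs
      linarith
    · intro y hy hZ hZ1
      have o1 := hF.ode (-y) (by linarith)
      have o2 := hG.ode (-y) (by linarith)
      have n1 := hF.neg1 (-y) (by linarith)
      have b1 : F1 0 ≤ F1 (-y) := hF.antiF1 (show -y < 1 by linarith) (show (0:ℝ) < 1 by norm_num) (by linarith)
      have b2 : Fhyp t 0 ≤ Fhyp t (-y) := hF.antiF (show -y < 1 by linarith) (show (0:ℝ) < 1 by norm_num) (by linarith)
      rw [hF10] at b1
      rw [hF.zero] at b2
      have hyp : 0 < y * (1 + y) := by positivity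
      refine pos_of_mul_pos_right (a := y * (1 + y)) ?_ hyp.le
      have e : y * (1 + y) * (L * ((1 * -F1 (-y)) + (1 * -F1 (-y) + y * F2 (-y))) - (F2 (-y) - G2 (-y))) =
        (1 + y) * (L * y * (2 + (s - t)) * (-F1 (-y)) + (L * (s + 1) * Fhyp t (-y) - (s - t) * (-F1 (-y))))
          + 2 * (L * (y * Fhyp t (-y)) - (Fhyp t (-y) - Fhyp s (-y))) := by
        linear_combination (1 - L * y) * o1 - o2 - (s + 1) * (1 + y) * hZ1
      rw [e]
      have p1 : 0 < L * y * (2 + (s - t)) * (-F1 (-y)) :=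
        mul_pos (mul_pos (mul_pos hL0 hy) (by linarith)) (by linarith)
      have p2 : (s - t) * (-F1 (-y)) ≤ (s - t) * (2 / (t + 1)) :=
        mul_le_mul_of_nonneg_left (by linarith) (by linarith)
      have p3 : L * (s + 1) * 1 ≤ L * (s + 1) * Fhyp t (-y) :=
        mul_le_mul_of_nonneg_left b2 (mul_pos hL0 (by linarith)).le
      have p4 : 0 < (1 + y) * (L * y * (2 + (s - t)) * (-F1 (-y)) + (L * (s + 1) * Fhyp t (-y) - (s - t) * (-F1 (-y)))) :=
        mul_pos (by linarith) (by linarith)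
      linarith

lemma part2 (t : ℝ) (ht : 1 ≤ t) (x : ℝ) (hx : x ≤ 0) :
      |deriv (fun s : ℝ => Fhyp s x) t| ≤ -2 * x * Fhyp t x / (t + 1) ^ 2 := by
  obtain ⟨F1, F2, hF⟩ := exists_HProps ht
  have hp := hF.pos x (by linarith)
  have hB : 0 ≤ -2 * x * Fhyp t x / (t + 1) ^ 2 :=
    div_nonneg (mul_nonneg (by linarith) hp.le) (by positivity)
  by_cases hd : DifferentiableAt ℝ (fun s : ℝ => Fhyp s x) t
  · have hs := hasDerivAt_iff_tendsto_slope.1 hd.hasDerivAt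
    have hs' : Filter.Tendsto (slope (fun s : ℝ => Fhyp s x) t) (nhdsWithin t (Ioi t))
        (nhds (deriv (fun s : ℝ => Fhyp s x) t)) :=
      hs.mono_left (nhdsWithin_mono _ fun u hu => ne_of_gt hu)
    have hb : ∀ s, t < s → |Fhyp s x - Fhyp t x| ≤ (s - t) * (-2 * x * Fhyp t x / (t + 1) ^ 2) := by
      intro s hts
      rcases hx.eq_or_lt with rfl | hx
      · obtain ⟨G1, G2, hG⟩ := exists_HProps (ht.trans hts.le)
        simp [hF.zero, hG.zero]
      · obtain ⟨h1, h2⟩ := neg_bounds ht hts hx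
        rw [abs_sub_comm, abs_of_pos (by linarith)]
        exact h2
    refine le_of_tendsto hs'.abs ?_
    filter_upwards [self_mem_nhdsWithin] with s hts
    have hts' : 0 < s - t := sub_pos.2 hts
    rw [slope_def_field, abs_div, abs_of_pos hts', div_le_iff₀ hts', mul_comm]
    exact hb s hts
  · rw [deriv_zero_of_not_differentiableAt hd, abs_zero]
    exact hB

lemma HProps.F2_bound {t : ℝ} {F1 F2 : ℝ → ℝ} (h : HProps t F1 F2) (ht : 1 ≤ t) {x : ℝ}
    (h0 : 0 ≤ x) (hx : x < 1) : -F2 x ≤ 8 / (1 - x) := by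
  have key : ∀ z, 1 / 2 ≤ z → z < 1 → -F2 z ≤ 4 / (1 - z) := by
    intro z hz hz1
    have o := h.ode z hz1
    have n1 := h.neg1 z hz1
    have n2 := h.neg2 z hz1
    have b : Fhyp t z ≤ Fhyp t 0 := h.antiF (show (0:ℝ) < 1 by norm_num) hz1 (by linarith)
    rw [h.zero] at b
    have h1 : 0 < 1 - z := by linarith
    rw [le_div_iff₀ h1]
    have h2 : 0 ≤ (t + 1) * (1 - z) * (-F1 z) :=
      mul_nonneg (mul_nonneg (by linarith) h1.le) (by linarith)
    have h3 : 0 ≤ (z - 1 / 2) * ((1 - z) * (-F2 z)) :=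
      mul_nonneg (by linarith) (mul_nonneg h1.le (by linarith))
    nlinarith
  have h1 : 0 < 1 - x := by linarith
  rcases le_total (1 / 2) x with hc | hc
  · refine (key x hc hx).trans ?_
    gcongr
    norm_num
  · have h2 := h.anti2 x (1 / 2) hc (by norm_num)
    have h3 := key (1 / 2) le_rfl (by norm_num)
    have h4 : 8 ≤ 8 / (1 - x) := by
      rw [le_div_iff₀ h1]; linarith
    norm_num at h3
    linarith

lemma part3 : ∃ C : ℝ, 0 < C ∧ ∀ n : ℕ, 2 ≤ n → ∀ x ∈ Ico (0:ℝ) 1,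
      |deriv (fun y : ℝ => Fhyp n y) x| ≤ C + C * |Real.log (1 - x)| := by
  refine ⟨8, by norm_num, fun n hn x hx => ?_⟩
  have hn' : (2:ℝ) ≤ n := by exact_mod_cast hn
  have ht : (1:ℝ) ≤ n := by linarith
  obtain ⟨F1, F2, h⟩ := exists_HProps ht
  have e : deriv (fun y : ℝ => Fhyp n y) x = F1 x := (h.d1 x hx.2).deriv
  rw [e, abs_of_neg (h.neg1 x hx.2)]
  have hd : ∀ z < 1, HasDerivAt (fun z => F1 z - 8 * Real.log (1 - z)) (F2 z - 8 * (-1 / (1 - z))) z := by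
    intro z hz
    have h1 : HasDerivAt (fun z : ℝ => 1 - z) (-1) z := by simpa using (hasDerivAt_id z).const_sub 1
    exact (h.d2 z hz).sub ((h1.log (by linarith)).const_mul 8)
  have hm : MonotoneOn (fun z => F1 z - 8 * Real.log (1 - z)) (Ico 0 1) := by
    refine monotoneOn_of_deriv_nonneg (convex_Ico 0 1)
      (fun z hz => (hd z hz.2).continuousAt.continuousWithinAt) ?_ ?_
    · intro z hz
      rw [interior_Ico] at hz
      exact (hd z hz.2).differentiableAt.differentiableWithinAt
    · intro z hz
      rw [interior_Ico] at hz
      rw [(hd z hz.2).deriv]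
      have := h.F2_bound ht hz.1.le hz.2
      have e : 8 * (-1 / (1 - z)) = -(8 / (1 - z)) := by ring
      linarith
  have hmx := hm ⟨le_rfl, one_pos⟩ hx hx.1
  simp only [sub_zero, Real.log_one, mul_zero, h.F1_zero ht] at hmx
  have h2 : 2 / ((n:ℝ) + 1) ≤ 1 := by
    rw [div_le_one (by linarith)]; linarith
  have := neg_le_abs (Real.log (1 - x))
  linarith

lemma part5 : ∃ C : ℝ, 0 < C ∧ ∀ n : ℕ, 2 ≤ n → ∀ x ∈ Ico (0:ℝ) 1,
      |deriv (deriv (fun y : ℝ => Fhyp n y)) x| ≤ C / (1 - x) := by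
  refine ⟨8, by norm_num, fun n hn x hx => ?_⟩
  have hn' : (2:ℝ) ≤ n := by exact_mod_cast hn
  have ht : (1:ℝ) ≤ n := by linarith
  obtain ⟨F1, F2, h⟩ := exists_HProps ht
  have e : deriv (fun y : ℝ => Fhyp n y) =ᶠ[nhds x] F1 := by
    filter_upwards [Iio_mem_nhds hx.2] with z hz
    exact (h.d1 z hz).deriv
  rw [e.deriv_eq, (h.d2 x hx.2).deriv, abs_of_nonpos (h.neg2 x hx.2)]
  exact h.F2_bound ht hx.1 hx.2


/-- monotonicity in the parameter `t` and quantitative bounds for the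
derivatives of `F_t(x) = F(a_t,b_t;c_t;x)` in the parameter and in the argument. -/
theorem Fhyp_parameter_derivative_bounds :
    -- (1) monotonicity in the parameter
    (∀ x : ℝ, x ∈ Ioc (0:ℝ) 1 → StrictMonoOn (fun t : ℝ => Fhyp t x) (Ici 1)) ∧
    (∀ x : ℝ, x < 0 → StrictAntiOn (fun t : ℝ => Fhyp t x) (Ici 1)) ∧
    -- (2) bound on the parameter derivative for `x ≤ 0`
    (∀ t : ℝ, 1 ≤ t → ∀ x : ℝ, x ≤ 0 →
      |deriv (fun s : ℝ => Fhyp s x) t| ≤ -2 * x * Fhyp t x / (t + 1) ^ 2) ∧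
    -- (3) logarithmic bound on `∂ₓF`
    (∃ C : ℝ, 0 < C ∧ ∀ n : ℕ, 2 ≤ n → ∀ x ∈ Ico (0:ℝ) 1,
      |deriv (fun y : ℝ => Fhyp n y) x| ≤ C + C * |Real.log (1 - x)|) ∧
    -- (4) bound on the parameter derivative at integers, uniformly for `x ∈ [0,1]`
    (∃ C : ℝ, 0 < C ∧ ∀ n : ℕ, 2 ≤ n → ∀ x ∈ Icc (0:ℝ) 1,
      |deriv (fun t : ℝ => Fhyp t x) n| ≤ C * Real.log n / (n : ℝ) ^ 2) ∧
    -- (5) bound on the second derivative in `x`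
    (∃ C : ℝ, 0 < C ∧ ∀ n : ℕ, 2 ≤ n → ∀ x ∈ Ico (0:ℝ) 1,
      |deriv (deriv (fun y : ℝ => Fhyp n y)) x| ≤ C / (1 - x)) := by
  exact ⟨part1a, fun x hx t ht s _ hts => (neg_bounds ht hts hx).1, part2, part3, part4, part5⟩
end

section
/- Let n≥1 be an integer, x∈(−∞,1)∖{0}, and g∈C([0,1];ℝ). Consider the ordinary differential equation (1−xr²)·r·F″(r)−(2n−1)(1−xr²)·F′(r)+8rx·F(r)=g(r) on (0,1). A function F∈C([0,1])∩C²((0,1)) with F(0)=0 solves this equation if and only if F(r)=r^{2n}F_n(xr²)·[F(1)/F_n(x)−(x^{n−1}/4)·∫_{xr²}^{x}(τ^{n+1}F_n(τ)²)^{−1}·(∫₀^τ (F_n(s)/(1−s))·√(x/s)·g(√(s/x))ds)dτ] for all r∈[0,1]; in particular the set of such solutions is a one-parameter family parametrized by the value F(1). -/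
open MeasureTheory Real Set

/-- parametric integral -/
lemma paramDeriv (w : ℝ → ℝ) (hw : IntervalIntegrable w volume 0 1) (p u : ℝ) (hu : u < 1) :
    HasDerivAt (fun v => ∫ t in (0:ℝ)..1, w t * (1 - v * t) ^ p)
      (∫ t in (0:ℝ)..1, (-p) * (t * w t) * (1 - u * t) ^ (p - 1)) u ∧
    IntervalIntegrable (fun t => w t * (1 - u * t) ^ p) volume 0 1 := by
  have hpos : ∀ v < (1:ℝ), ∀ t ∈ Icc (0:ℝ) 1, 0 < 1 - v * t := by
    intro v hv t ht
    rcases le_or_gt v 0 with h | h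
    · nlinarith [ht.1, ht.2]
    · nlinarith [ht.1, ht.2]
  have hint : ∀ v < (1:ℝ), ∀ (w' : ℝ → ℝ) (q : ℝ), IntervalIntegrable w' volume 0 1 →
      IntervalIntegrable (fun t => w' t * (1 - v * t) ^ q) volume 0 1 := by
    intro v hv w' q hw'
    apply hw'.mul_continuousOn
    rw [uIcc_of_le zero_le_one]
    apply ContinuousOn.rpow_const (by fun_prop)
    intro t ht
    exact Or.inl (hpos v hv t ht).ne'
  refine ⟨?_, hint u hu w p hw⟩
  set m : ℝ := min 1 ((1 - u) / 2) with hm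
  have hm0 : 0 < m := lt_min one_pos (by linarith)
  set M : ℝ := 2 + |u| + (1-u) with hM
  have hrange : ∀ v ∈ Metric.ball u ((1-u)/2), ∀ t ∈ Icc (0:ℝ) 1, 1 - v * t ∈ Icc m M := by
    intro v hv t ht
    rw [Metric.mem_ball, Real.dist_eq, abs_lt] at hv
    have hua := abs_le.1 (le_refl |u|)
    constructor
    · have h1 : m ≤ 1 := min_le_left _ _
      have h2 : m ≤ (1-u)/2 := min_le_right _ _
      nlinarith [ht.1, ht.2, mul_nonneg ht.1 (by linarith [hv.2] : (0:ℝ) ≤ (1+u)/2 - v),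
        mul_nonneg (sub_nonneg.2 ht.2) (sub_nonneg.2 h1), mul_nonneg ht.1 (sub_nonneg.2 h2)]
    · have : -v ≤ |u| + (1-u) := by linarith [hv.1]
      nlinarith [ht.1, ht.2, mul_nonneg ht.1 (by linarith : (0:ℝ) ≤ |u| + (1-u) + v), abs_nonneg u]
  obtain ⟨B, hB⟩ : ∃ B, ∀ y ∈ Icc m M, ‖y ^ (p-1)‖ ≤ B := by
    apply isCompact_Icc.exists_bound_of_continuousOn
    apply ContinuousOn.rpow_const continuousOn_id
    intro y hy
    exact Or.inl (hm0.trans_le hy.1).ne'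
  have htw : IntervalIntegrable (fun t => (-p) * (t * w t)) volume 0 1 :=
    (hw.continuousOn_mul continuousOn_id).const_mul _
  have hv1 : ∀ v ∈ Metric.ball u ((1-u)/2), v < 1 := by
    intro v hv
    rw [Metric.mem_ball, Real.dist_eq, abs_lt] at hv
    linarith [hv.2]
  refine (intervalIntegral.hasDerivAt_integral_of_dominated_loc_of_deriv_le
    (F := fun v t => w t * (1 - v * t) ^ p)
    (F' := fun v t => (-p) * (t * w t) * (1 - v * t) ^ (p - 1))
    (bound := fun t => ‖(-p) * (t * w t)‖ * B)
    (Metric.ball_mem_nhds u (by linarith : 0 < (1-u)/2)) ?_ (hint u hu w p hw) ?_ ?_ ?_ ?_).2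
  · filter_upwards [Metric.ball_mem_nhds u (by linarith : 0 < (1-u)/2)] with v hv
    have := hint v (hv1 v hv) w p hw
    exact this.def'.aestronglyMeasurable
  · exact (hint u hu _ (p-1) htw).def'.aestronglyMeasurable
  · refine Filter.Eventually.of_forall fun t ht v hv => ?_
    rw [uIoc_of_le zero_le_one] at ht
    rw [norm_mul]
    exact mul_le_mul_of_nonneg_left (hB _ (hrange v hv t ⟨ht.1.le, ht.2⟩)) (norm_nonneg _)
  · exact htw.norm.mul_const _
  · refine Filter.Eventually.of_forall fun t ht v hv => ?_
    rw [uIoc_of_le zero_le_one] at ht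
    have h1 : HasDerivAt (fun v : ℝ => 1 - v * t) (-t) v := by
      simpa using ((hasDerivAt_id v).mul_const t).const_sub 1
    have h2 := (h1.rpow_const (p := p) (Or.inl (hpos v (hv1 v hv) t ⟨ht.1.le, ht.2⟩).ne')).const_mul (w t)
    refine h2.congr_deriv ?_
    ring

lemma sqSubst (f : ℝ → ℝ) (a b : ℝ) (ha : 0 ≤ a) (hab : a ≤ b) :
    ∫ s in (a^2)..(b^2), f s = ∫ σ in a..b, 2 * σ * f (σ^2) := by
  have him : (fun σ : ℝ => σ^2) '' Ioc a b = Ioc (a^2) (b^2) := by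
    ext s
    constructor
    · rintro ⟨σ, ⟨h1, h2⟩, rfl⟩
      exact ⟨by dsimp only; nlinarith, by dsimp only; nlinarith⟩
    · rintro ⟨h1, h2⟩
      have hs : 0 ≤ s := (sq_nonneg a).trans h1.le
      refine ⟨√s, ⟨Real.lt_sqrt_of_sq_lt h1, Real.sqrt_le_iff.2 ⟨ha.trans hab, h2⟩⟩, Real.sq_sqrt hs⟩
  rw [intervalIntegral.integral_of_le (by nlinarith), intervalIntegral.integral_of_le hab, ← him]
  rw [MeasureTheory.integral_image_eq_integral_abs_deriv_smul measurableSet_Ioc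
    (f' := fun σ => 2 * σ)]
  · apply setIntegral_congr_fun measurableSet_Ioc
    intro σ hσ
    have : 0 < σ := ha.trans_lt hσ.1
    simp [abs_of_pos this]
  · intro σ _
    simpa using (hasDerivAt_pow 2 σ).hasDerivWithinAt
  · intro s hs t ht h
    have h1 : 0 < s := ha.trans_lt hs.1
    have h2 : 0 < t := ha.trans_lt ht.1
    dsimp only at h
    exact (sq_eq_sq₀ h1.le h2.le).1 h

lemma sqSubstX (f : ℝ → ℝ) (x a b : ℝ) (ha : 0 ≤ a) (hab : a ≤ b) :
    ∫ s in (x*a^2)..(x*b^2), f s = ∫ σ in a..b, 2 * x * σ * f (x*σ^2) := by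
  rw [← intervalIntegral.mul_integral_comp_mul_left, sqSubst _ _ _ ha hab,
    ← intervalIntegral.integral_const_mul]
  congr 1; ext; ring

lemma weightInt (b c : ℝ) (hb : 1 ≤ b) (hc : b < c) :
    IntervalIntegrable (fun t : ℝ => t ^ (b - 1) * (1 - t) ^ (c - b - 1)) volume 0 1 := by
  have h1 : IntervalIntegrable (fun t : ℝ => (1 - t) ^ (c - b - 1)) volume 0 1 := by
    have := (intervalIntegral.intervalIntegrable_rpow' (a := 0) (b := 1)
      (r := c - b - 1) (by linarith)).comp_sub_left 1
    simpa using this.symm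
  apply h1.continuousOn_mul
  apply ContinuousOn.rpow_const continuousOn_id
  intro t _
  exact Or.inr (by linarith)

lemma eulerFacts (a b c : ℝ) (hb : 1 ≤ b) (hc : b < c) :
    ∃ f0 f1 f2 : ℝ → ℝ, (∀ u, f0 u = ∫ t in (0:ℝ)..1, t ^ (b - 1) * (1 - t) ^ (c - b - 1) * (1 - u * t) ^ (-a)) ∧
      ∀ u < 1, 0 < f0 u ∧ HasDerivAt f0 (f1 u) u ∧ HasDerivAt f1 (f2 u) u ∧
        u * (1 - u) * f2 u + (c - (a + b + 1) * u) * f1 u - a * b * f0 u = 0 := by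
  set w : ℝ → ℝ := fun t : ℝ => t ^ (b - 1) * (1 - t) ^ (c - b - 1) with hw
  have hwI : IntervalIntegrable w volume 0 1 := weightInt b c hb hc
  obtain ⟨p, hp⟩ : ∃ p, p = -a := ⟨_, rfl⟩
  rw [← hp]
  set w1 : ℝ → ℝ := fun t => (-p) * (t * w t) with hw1
  have hw1I : IntervalIntegrable w1 volume 0 1 :=
    (hwI.continuousOn_mul continuousOn_id).const_mul _
  set w2 : ℝ → ℝ := fun t => (-(p-1)) * (t * w1 t) with hw2
  have hw2I : IntervalIntegrable w2 volume 0 1 :=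
    (hw1I.continuousOn_mul continuousOn_id).const_mul _
  refine ⟨fun u => ∫ t in (0:ℝ)..1, w t * (1 - u * t) ^ p,
    fun u => ∫ t in (0:ℝ)..1, w1 t * (1 - u * t) ^ (p-1),
    fun u => ∫ t in (0:ℝ)..1, w2 t * (1 - u * t) ^ (p-1-1), fun u => rfl, fun u hu => ?_⟩
  obtain ⟨hd0, hi0⟩ := paramDeriv w hwI p u hu
  obtain ⟨hd1, hi1⟩ := paramDeriv w1 hw1I (p-1) u hu
  obtain ⟨-, hi2⟩ := paramDeriv w2 hw2I (p-1-1) u hu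
  have hpos : ∀ t ∈ Icc (0:ℝ) 1, 0 < 1 - u * t := by
    intro t ht
    rcases le_or_gt u 0 with h | h
    · nlinarith [ht.1, ht.2]
    · nlinarith [ht.1, ht.2]
  refine ⟨?_, hd0, hd1, ?_⟩
  · refine intervalIntegral.intervalIntegral_pos_of_pos_on hi0 (fun t ht => ?_) one_pos
    have h1 : 0 < 1 - t := by linarith [ht.2]
    have h2 := hpos t ⟨ht.1.le, ht.2.le⟩
    have h0 := ht.1
    simp only [hw]
    positivity
  · dsimp only
    rw [← intervalIntegral.integral_const_mul, ← intervalIntegral.integral_const_mul,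
      ← intervalIntegral.integral_const_mul,
      ← intervalIntegral.integral_add (hi2.const_mul _) (hi1.const_mul _),
      ← intervalIntegral.integral_sub ((hi2.const_mul _).add (hi1.const_mul _)) (hi0.const_mul _)]
    rw [intervalIntegral.integral_eq_sub_of_hasDerivAt_of_le zero_le_one
      (f := fun t => p * (t ^ b * (1 - t) ^ (c - b) * (1 - u * t) ^ (p-1)))]
    · rw [Real.zero_rpow (by linarith : b ≠ 0), sub_self, Real.zero_rpow (by linarith : c - b ≠ 0)]
      ring
    · apply ContinuousOn.mul continuousOn_const
      apply ContinuousOn.mul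
      · apply ContinuousOn.mul
        · exact ContinuousOn.rpow_const continuousOn_id fun t _ => Or.inr (by linarith)
        · exact ContinuousOn.rpow_const (by fun_prop) fun t _ => Or.inr (by linarith)
      · exact ContinuousOn.rpow_const (by fun_prop) fun t ht => Or.inl (hpos t ht).ne'
    · intro t ht
      have h0 := ht.1
      have h1 : 0 < 1 - t := by linarith [ht.2]
      have h2 := hpos t ⟨ht.1.le, ht.2.le⟩
      have d1 : HasDerivAt (fun t : ℝ => t ^ b) (b * t ^ (b-1)) t :=
        Real.hasDerivAt_rpow_const (Or.inl h0.ne')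
      have d2 : HasDerivAt (fun t : ℝ => (1 - t) ^ (c - b)) (-1 * (c - b) * (1-t) ^ (c - b - 1)) t :=
        ((hasDerivAt_id t).const_sub 1).rpow_const (Or.inl h1.ne')
      have d3' : HasDerivAt (fun t : ℝ => 1 - u * t) (-u) t := by
        simpa using ((hasDerivAt_id t).const_mul u).const_sub 1
      have d3 : HasDerivAt (fun t : ℝ => (1 - u * t) ^ (p-1)) (-u * (p-1) * (1-u*t) ^ (p-1-1)) t :=
        d3'.rpow_const (Or.inl h2.ne')
      refine (((d1.mul d2).mul d3).const_mul p).congr_deriv ?_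
      have e1 : t ^ b = t ^ (b-1) * t := by
        rw [← Real.rpow_add_one h0.ne']; congr 1; ring
      have e2 : (1-t) ^ (c-b) = (1-t) ^ (c-b-1) * (1-t) := by
        rw [← Real.rpow_add_one h1.ne']; congr 1; ring
      have e3 : (1-u*t) ^ (p-1) = (1-u*t) ^ (p-1-1) * (1-u*t) := by
        rw [← Real.rpow_add_one h2.ne']; congr 1; ring
      have e4 : (1-u*t) ^ p = (1-u*t) ^ (p-1) * (1-u*t) := by
        rw [← Real.rpow_add_one h2.ne']; congr 1; ring
      simp only [hw2, hw1, hw, Pi.mul_apply]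
      rw [e4, e3, e1, e2]
      have : a = -p := by linarith
      rw [this]
      ring
    · exact ((hi2.const_mul _).add (hi1.const_mul _)).sub (hi0.const_mul _)

lemma phiFacts (n : ℕ) (hn : 1 ≤ n) : ∃ f1 f2 : ℝ → ℝ, ∀ u < 1, 0 < Fhyp n u ∧
    HasDerivAt (Fhyp n) (f1 u) u ∧ HasDerivAt f1 (f2 u) u ∧
      (1 - u) * (u * f2 u + (n + 1) * f1 u) + 2 * Fhyp n u = 0 := by
  rcases hn.eq_or_lt with h | h
  · subst h
    have hs : √((1:ℝ)^2 + 8) = 3 := by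
      rw [show (1:ℝ)^2 + 8 = 3^2 by norm_num]; exact Real.sqrt_sq (by norm_num)
    have ha : aCoef ((1:ℕ):ℝ) = -1 := by rw [Nat.cast_one, aCoef, hs]; norm_num
    have hb : bCoef ((1:ℕ):ℝ) = 2 := by rw [Nat.cast_one, bCoef, hs]; norm_num
    have hF : Fhyp ((1:ℕ):ℝ) = fun u => 1 - u := by
      ext u
      rw [Fhyp, ha, hb, hyper, if_neg (by norm_num)]
      rw [tsum_eq_sum (s := Finset.range 2)]
      · simp [Finset.sum_range_succ, poch]
        norm_num
        ring
      · intro k hk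
        have hk : 2 ≤ k := by simp at hk; omega
        obtain ⟨m, rfl⟩ := Nat.exists_eq_add_of_le hk
        have : poch (-1) (2 + m) = 0 := by
          rw [poch, add_comm]
          induction m with
          | zero => simp [ascPochhammer_succ_eval]
          | succ m ih => 
            rw [show m + 1 + 2 = (m + 2) + 1 by ring, ascPochhammer_succ_eval, ih (by simp; omega) (by omega)]
            simp
        simp [this]
    refine ⟨fun _ => -1, fun _ => 0, fun u hu => ?_⟩
    rw [hF]
    refine ⟨by simpa using hu, by simpa using (hasDerivAt_id u).const_sub 1, hasDerivAt_const _ _, ?_⟩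
    push_cast
    ring
  · have h2 : (2:ℝ) ≤ n := by exact_mod_cast h
    have hq : √((n:ℝ)^2+8) ^ 2 = (n:ℝ)^2+8 := Real.sq_sqrt (by positivity)
    have hq0 := Real.sqrt_nonneg ((n:ℝ)^2+8)
    have hb : 1 ≤ bCoef n := by unfold bCoef; linarith
    have hc : bCoef n < n + 1 := by unfold bCoef; nlinarith
    have hab : aCoef n * bCoef n = -2 := by unfold aCoef bCoef; nlinarith
    have hab' : aCoef n + bCoef n = n := by unfold aCoef bCoef; ring
    obtain ⟨f0, f1, f2, hf0, H⟩ := eulerFacts (aCoef n) (bCoef n) (n+1) hb hc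
    set κ := Real.Gamma (n+1) / (Real.Gamma (bCoef n) * Real.Gamma (n + 1 - bCoef n)) with hκ
    have hκ0 : 0 < κ := by
      have := Real.Gamma_pos_of_pos (by linarith : 0 < bCoef n)
      have := Real.Gamma_pos_of_pos (by linarith : 0 < n + 1 - bCoef n)
      have := Real.Gamma_pos_of_pos (by linarith : 0 < (n:ℝ) + 1)
      positivity
    have hF : Fhyp n = fun u => κ * f0 u := by
      ext u
      rw [Fhyp, hyper, if_pos ⟨hc, by linarith⟩, hf0]
    refine ⟨fun u => κ * f1 u, fun u => κ * f2 u, fun u hu => ?_⟩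
    obtain ⟨h0, h1, h2, h3⟩ := H u hu
    rw [hF]
    refine ⟨mul_pos hκ0 h0, h1.const_mul _, h2.const_mul _, ?_⟩
    rw [hab, hab'] at h3
    linear_combination κ * h3

lemma limZero (n : ℕ) (hn : 1 ≤ n) (h V : ℝ → ℝ) (L : ℝ)
    (hd : ∀ r ∈ Ioo (0:ℝ) 1, HasDerivAt h (V r / r ^ (2 * n + 1)) r)
    (hV : Filter.Tendsto V (nhdsWithin 0 (Ioi 0)) (nhds L))
    (hh : Filter.Tendsto (fun r => r ^ (2 * n) * h r) (nhdsWithin 0 (Ioi 0)) (nhds 0)) : L ≤ 0 := by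
  by_contra! hL
  have hn' : (0:ℝ) < n := by exact_mod_cast hn
  have h1 : ∀ᶠ r in nhdsWithin (0:ℝ) (Ioi 0), L / 2 < V r :=
    hV.eventually (lt_mem_nhds (by linarith))
  have h2 : ∀ᶠ r in nhdsWithin (0:ℝ) (Ioi 0), r < 1 :=
    (eventually_lt_nhds one_pos).filter_mono nhdsWithin_le_nhds
  obtain ⟨δ, hδ, hsub⟩ := mem_nhdsGT_iff_exists_Ioo_subset.1 (h1.and h2)
  have hδ0 : (0:ℝ) < δ := hδ
  set k : ℝ → ℝ := fun r => h r + L / (4 * n) * (r ^ (2 * n))⁻¹ with hk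
  have hkd : ∀ r ∈ Ioo 0 δ, HasDerivAt k ((V r - L / 2) / r ^ (2 * n + 1)) r := by
    intro r hr
    have hr0 : r ≠ 0 := hr.1.ne'
    have d1 := hd r ⟨hr.1, (hsub hr).2⟩
    have d2 := ((hasDerivAt_pow (2 * n) r).inv (pow_ne_zero _ hr0)).const_mul (L / (4 * n))
    refine (d1.add d2).congr_deriv ?_
    obtain ⟨m, rfl⟩ := Nat.exists_eq_add_of_le hn
    rw [show 2 * (1 + m) - 1 = 2 * m + 1 by omega]
    push_cast
    push_cast at hn'
    have : (1 + (m:ℝ)) ≠ 0 := hn'.ne'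
    field_simp
    ring
  have hmono : MonotoneOn k (Ioo 0 δ) := by
    apply monotoneOn_of_deriv_nonneg (convex_Ioo _ _)
    · exact fun r hr => (hkd r hr).continuousAt.continuousWithinAt
    · rw [interior_Ioo]
      exact fun r hr => (hkd r hr).differentiableAt.differentiableWithinAt
    · rw [interior_Ioo]
      intro r hr
      rw [(hkd r hr).deriv]
      have := (hsub hr).1
      exact div_nonneg (by linarith) (pow_nonneg hr.1.le _)
  have hev : ∀ᶠ r in nhdsWithin (0:ℝ) (Ioi 0),
      r ^ (2 * n) * h r + L / (4 * n) ≤ k (δ / 2) * r ^ (2 * n) := by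
    filter_upwards [Ioo_mem_nhdsGT (half_pos hδ0)] with r hr
    have h3 := hmono ⟨hr.1, by linarith [hr.2]⟩ ⟨half_pos hδ0, by linarith⟩ hr.2.le
    have hp : 0 < r ^ (2 * n) := pow_pos hr.1 _
    have h4 := mul_le_mul_of_nonneg_right h3 hp.le
    have h5 : k r * r ^ (2 * n) = r ^ (2 * n) * h r + L / (4 * n) := by
      simp only [hk]
      field_simp
    linarith
  have hlim : Filter.Tendsto (fun r : ℝ => k (δ / 2) * r ^ (2 * n)) (nhdsWithin 0 (Ioi 0)) (nhds 0) := by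
    have : ContinuousAt (fun r : ℝ => k (δ / 2) * r ^ (2 * n)) 0 := by fun_prop
    have := this.tendsto.mono_left (nhdsWithin_le_nhds (s := Ioi 0))
    simpa [show n ≠ 0 by omega] using this
  have := le_of_tendsto_of_tendsto (hh.add_const _) hlim hev
  have h6 : 0 < L / (4 * n) := by positivity
  linarith

/-- inner primitive in the variable `r` -/
noncomputable def kInt (x : ℝ) (φ g : ℝ → ℝ) (r : ℝ) : ℝ :=
  ∫ σ in (0:ℝ)..r, φ (x * σ ^ 2) * g σ / (1 - x * σ ^ 2)

lemma inner_subst (x : ℝ) (hx0 : x ≠ 0) (φ g : ℝ → ℝ) (r : ℝ) (h0 : 0 < r) :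
    ∫ s in (0:ℝ)..(x * r ^ 2), φ s / (1 - s) * Real.sqrt (x / s) * g (Real.sqrt (s / x))
      = 2 * x * kInt x φ g r := by
  have := sqSubstX (fun s => φ s / (1 - s) * Real.sqrt (x / s) * g (Real.sqrt (s / x))) x 0 r le_rfl h0.le
  rw [show x * 0 ^ 2 = (0:ℝ) by ring] at this
  rw [this, kInt, ← intervalIntegral.integral_const_mul,
    intervalIntegral.integral_of_le h0.le, intervalIntegral.integral_of_le h0.le]
  apply setIntegral_congr_fun measurableSet_Ioc
  intro σ hσ
  have hs : 0 < σ := hσ.1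
  have e1 : √(x / (x * σ ^ 2)) = σ⁻¹ := by
    rw [show x / (x * σ ^ 2) = (σ⁻¹) ^ 2 by field_simp]
    exact Real.sqrt_sq (by positivity)
  have e2 : √(x * σ ^ 2 / x) = σ := by
    rw [show x * σ ^ 2 / x = σ ^ 2 by field_simp]
    exact Real.sqrt_sq hs.le
  simp only [e1, e2]
  have : σ * σ⁻¹ = 1 := mul_inv_cancel₀ hs.ne'
  linear_combination (2 * x * φ (x * σ ^ 2) / (1 - x * σ ^ 2) * g σ) * this

lemma outer_subst (n : ℕ) (hn : 1 ≤ n) (x : ℝ) (hx : x < 1) (hx0 : x ≠ 0) (φ g : ℝ → ℝ)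
    (r : ℝ) (h0 : 0 < r) (h1 : r ≤ 1) :
    x ^ (n - 1) / 4 *
              ∫ τ in (x * r ^ 2)..x,
                (1 / (τ ^ (n + 1) * φ τ ^ 2)) *
                  ∫ s in (0:ℝ)..τ,
                    φ s / (1 - s) * Real.sqrt (x / s) * g (Real.sqrt (s / x))
      = ∫ ρ in r..1, kInt x φ g ρ / (ρ ^ (2 * n + 1) * φ (x * ρ ^ 2) ^ 2) := by
  have := sqSubstX (fun τ => (1 / (τ ^ (n + 1) * φ τ ^ 2)) *
                  ∫ s in (0:ℝ)..τ,
                    φ s / (1 - s) * Real.sqrt (x / s) * g (Real.sqrt (s / x))) x r 1 h0.le h1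
  rw [show x * 1 ^ 2 = x by ring] at this
  rw [this, ← intervalIntegral.integral_const_mul,
    intervalIntegral.integral_of_le h1, intervalIntegral.integral_of_le h1]
  apply setIntegral_congr_fun measurableSet_Ioc
  intro ρ hρ
  have hs : 0 < ρ := h0.trans hρ.1
  dsimp only
  rw [inner_subst x hx0 φ g ρ hs]
  obtain ⟨m, rfl⟩ := Nat.exists_eq_add_of_le hn
  rw [show 1 + m - 1 = m by omega]
  by_cases hz : φ (x * ρ ^ 2) = 0
  · simp [hz]
  field_simp
  ring

lemma main_equiv (n : ℕ) (hn : 1 ≤ n) (x : ℝ) (hx : x < 1) (φ f1 f2 : ℝ → ℝ)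
    (hφ : ∀ u < 1, 0 < φ u ∧ HasDerivAt φ (f1 u) u ∧ HasDerivAt f1 (f2 u) u ∧
      (1 - u) * (u * f2 u + (n + 1) * f1 u) + 2 * φ u = 0)
    (g : ℝ → ℝ) (hg : ContinuousOn g (Icc 0 1))
    (F : ℝ → ℝ) (hFcont : ContinuousOn F (Icc 0 1))
    (hFsmooth : ContDiffOn ℝ 2 F (Ioo 0 1)) (hF0 : F 0 = 0) :
    (∀ r ∈ Icc (0:ℝ) 1,
        F r = r ^ (2 * n) * φ (x * r ^ 2) *
          (F 1 / φ x - ∫ ρ in r..1, kInt x φ g ρ / (ρ ^ (2 * n + 1) * φ (x * ρ ^ 2) ^ 2)))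
    ↔ (∀ r ∈ Ioo (0:ℝ) 1,
        (1 - x * r ^ 2) * r * deriv (deriv F) r
          - (2 * (n : ℝ) - 1) * (1 - x * r ^ 2) * deriv F r
          + 8 * r * x * F r = g r) := by
  have hx1 : ∀ r ∈ Icc (0:ℝ) 1, x * r ^ 2 < 1 := by
    intro r hr
    have : r ^ 2 ≤ 1 := by nlinarith [hr.1, hr.2]
    rcases le_or_gt x 0 with h | h <;> nlinarith [sq_nonneg r]
  -- regularity of `F`
  have hF1 : ∀ r ∈ Ioo (0:ℝ) 1, HasDerivAt F (deriv F r) r := fun r hr =>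
    ((hFsmooth.contDiffAt (isOpen_Ioo.mem_nhds hr)).differentiableAt (by norm_num)).hasDerivAt
  have hF2 : ∀ r ∈ Ioo (0:ℝ) 1, HasDerivAt (deriv F) (deriv (deriv F) r) r := fun r hr =>
    ((((contDiffOn_succ_iff_deriv_of_isOpen (n := 1) isOpen_Ioo).1 hFsmooth).2.2.contDiffAt
      (isOpen_Ioo.mem_nhds hr)).differentiableAt (by norm_num)).hasDerivAt
  -- continuity of the composed function
  have hφc : ContinuousOn (fun r => φ (x * r ^ 2)) (Icc 0 1) := by
    intro r hr
    have h1 : ContinuousAt φ (x * r ^ 2) := (hφ _ (hx1 r hr)).2.1.continuousAt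
    exact (ContinuousAt.comp (f := fun r : ℝ => x * r ^ 2) h1 (by fun_prop)).continuousWithinAt
  have hinner : ∀ r : ℝ, HasDerivAt (fun r : ℝ => x * r ^ 2) (2 * x * r) r := by
    intro r
    refine ((hasDerivAt_pow 2 r).const_mul x).congr_deriv ?_
    norm_num; ring
  have hφd : ∀ r ∈ Icc (0:ℝ) 1, HasDerivAt (fun r => φ (x * r ^ 2)) (f1 (x * r ^ 2) * (2 * x * r)) r :=
    fun r hr => HasDerivAt.comp r (hφ _ (hx1 r hr)).2.1 (hinner r)
  have hf1d : ∀ r ∈ Icc (0:ℝ) 1, HasDerivAt (fun r => f1 (x * r ^ 2)) (f2 (x * r ^ 2) * (2 * x * r)) r :=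
    fun r hr => HasDerivAt.comp r (hφ _ (hx1 r hr)).2.2.1 (hinner r)
  -- the primitive
  set q : ℝ → ℝ := fun σ => φ (x * σ ^ 2) * g σ / (1 - x * σ ^ 2) with hq
  have hqc : ContinuousOn q (Icc 0 1) := by
    apply (hφc.mul hg).div (by fun_prop)
    intro r hr
    linarith [hx1 r hr]
  have hKc : ContinuousOn (kInt x φ g) (Icc 0 1) := by
    have := intervalIntegral.continuousOn_primitive_interval (a := 0) (b := 1) (f := q) (μ := volume)
      (by rw [uIcc_of_le zero_le_one]; exact hqc.integrableOn_Icc)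
    rwa [uIcc_of_le zero_le_one] at this
  have hKd : ∀ r ∈ Ioo (0:ℝ) 1, HasDerivAt (kInt x φ g) (q r) r := by
    intro r hr
    apply intervalIntegral.integral_hasDerivAt_right
    · apply ContinuousOn.intervalIntegrable
      rw [uIcc_of_le hr.1.le]
      exact hqc.mono (Icc_subset_Icc_right hr.2.le)
    · exact (hqc.mono Ioo_subset_Icc_self).stronglyMeasurableAtFilter isOpen_Ioo r hr
    · exact hqc.continuousAt (Icc_mem_nhds hr.1 hr.2)
  set k : ℝ → ℝ := fun ρ => kInt x φ g ρ / (ρ ^ (2 * n + 1) * φ (x * ρ ^ 2) ^ 2) with hk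
  have hkc : ContinuousOn k (Ioc 0 1) := by
    apply (hKc.mono Ioc_subset_Icc_self).div
    · exact (by fun_prop : Continuous fun ρ : ℝ => ρ ^ (2 * n + 1)).continuousOn.mul
        ((hφc.mono Ioc_subset_Icc_self).pow 2)
    · intro r hr
      have h1 := (hφ _ (hx1 r ⟨hr.1.le, hr.2⟩)).1
      have h2 := hr.1
      positivity
  have hki : ∀ r ∈ Ioc (0:ℝ) 1, IntervalIntegrable k volume r 1 := by
    intro r hr
    apply ContinuousOn.intervalIntegrable
    rw [uIcc_of_le hr.2]
    exact hkc.mono fun s hs => ⟨hr.1.trans_le hs.1, hs.2⟩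
  have hkd : ∀ r ∈ Ioo (0:ℝ) 1, HasDerivAt (fun r => ∫ ρ in r..1, k ρ) (-k r) r := by
    intro r hr
    apply intervalIntegral.integral_hasDerivAt_left (hki r ⟨hr.1, hr.2.le⟩)
    · exact (hkc.mono Ioo_subset_Ioc_self).stronglyMeasurableAtFilter isOpen_Ioo r hr
    · exact hkc.continuousAt (Ioc_mem_nhds hr.1 hr.2)
  have hk1 : ContinuousWithinAt (fun r => ∫ ρ in r..1, k ρ) (Iio 1) 1 := by
    have h := intervalIntegral.continuousOn_primitive_interval_left (a := 1/2) (b := 1) (f := k) (μ := volume)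
      (by
        rw [uIcc_of_le (by norm_num)]
        exact (hkc.mono fun s hs => ⟨by linarith [hs.1], hs.2⟩).integrableOn_Icc)
    rw [uIcc_of_le (by norm_num)] at h
    have h1 := h 1 ⟨by norm_num, le_rfl⟩
    refine h1.mono_of_mem_nhdsWithin ?_
    filter_upwards [Ioo_mem_nhdsLT (by norm_num : (1/2:ℝ) < 1)] with s hs using ⟨hs.1.le, hs.2.le⟩
  -- the Wronskian
  set W : ℝ → ℝ := fun r => r * φ (x * r ^ 2) * deriv F r
    - F r * (2 * n * φ (x * r ^ 2) + 2 * x * r ^ 2 * f1 (x * r ^ 2)) with hW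
  have hWd : ∀ r ∈ Ioo (0:ℝ) 1, ∃ W', HasDerivAt W W' r ∧ (1 - x * r ^ 2) * W' =
      φ (x * r ^ 2) * ((1 - x * r ^ 2) * r * deriv (deriv F) r
          - (2 * (n : ℝ) - 1) * (1 - x * r ^ 2) * deriv F r
          + 8 * r * x * F r) := by
    intro r hr
    have hr' := Ioo_subset_Icc_self hr
    have d1 := ((hasDerivAt_id r).mul (hφd r hr')).mul (hF2 r hr)
    have d2 := (((hφd r hr').const_mul (2 * (n:ℝ))).add
      (((hasDerivAt_pow 2 r).const_mul (2 * x)).mul (hf1d r hr')))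
    have d3 := d1.sub ((hF1 r hr).mul d2)
    refine ⟨_, d3, ?_⟩
    have ho := (hφ _ (hx1 r hr')).2.2.2
    simp
    linear_combination (-4 * x * r * F r) * ho
  have hhd : ∀ r ∈ Ioo (0:ℝ) 1, HasDerivAt (fun r => F r / (r ^ (2 * n) * φ (x * r ^ 2)))
      (W r / (r ^ (2 * n + 1) * φ (x * r ^ 2) ^ 2)) r := by
    intro r hr
    have hr' := Ioo_subset_Icc_self hr
    have hp := (hφ _ (hx1 r hr')).1
    have hr0 := hr.1
    refine ((hF1 r hr).div ((hasDerivAt_pow (2 * n) r).mul (hφd r hr')) (by simp; exact ⟨fun h => absurd h hr0.ne', hp.ne'⟩)).congr_deriv ?_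
    obtain ⟨m, rfl⟩ := Nat.exists_eq_add_of_le hn
    rw [show 2 * (1 + m) - 1 = 2 * m + 1 by omega]
    simp only [hW, Pi.mul_apply]
    push_cast
    field_simp
    ring
  have hODE : (∀ r ∈ Ioo (0:ℝ) 1,
        (1 - x * r ^ 2) * r * deriv (deriv F) r
          - (2 * (n : ℝ) - 1) * (1 - x * r ^ 2) * deriv F r
          + 8 * r * x * F r = g r) ↔ ∀ r ∈ Ioo (0:ℝ) 1, HasDerivAt W (q r) r := by
    refine forall₂_congr fun r hr => ?_
    obtain ⟨W', h1, h2⟩ := hWd r hr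
    have hr' := Ioo_subset_Icc_self hr
    have hp := (hφ _ (hx1 r hr')).1
    have hu : 1 - x * r ^ 2 ≠ 0 := by linarith [hx1 r hr']
    constructor
    · intro h
      rw [h] at h2
      convert h1 using 1
      simp only [hq]
      rw [← h2]
      field_simp
    · intro h
      have h3 := h1.unique h
      rw [h3] at h2
      have h4 : φ (x * r ^ 2) * g r = (1 - x * r ^ 2) * q r := by
        simp only [hq]; field_simp
      rw [← h4] at h2
      exact (mul_left_cancel₀ hp.ne' h2).symm
  rw [hODE]
  constructor
  · intro h
    have hWK : ∀ r ∈ Ioo (0:ℝ) 1, W r = kInt x φ g r := by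
      intro r hr
      have hr' := Ioo_subset_Icc_self hr
      have hp := (hφ _ (hx1 r hr')).1
      have hr0 := hr.1
      have e : (fun r => F r / (r ^ (2 * n) * φ (x * r ^ 2))) =ᶠ[nhds r]
          fun r => F 1 / φ x - ∫ ρ in r..1, k ρ := by
        filter_upwards [isOpen_Ioo.mem_nhds hr] with s hs
        have hs' := Ioo_subset_Icc_self hs
        have hp := (hφ _ (hx1 s hs')).1
        have hs0 := hs.1
        rw [h s hs', mul_div_cancel_left₀ _ (by positivity)]
      have d := ((hkd r hr).const_sub (F 1 / φ x)).congr_of_eventuallyEq e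
      have := (hhd r hr).unique d
      simp only [hk, neg_neg] at this
      rwa [div_left_inj' (by positivity)] at this
    intro r hr
    apply (hKd r hr).congr_of_eventuallyEq
    filter_upwards [isOpen_Ioo.mem_nhds hr] with s hs using hWK s hs
  · intro h
    obtain ⟨C, hC⟩ : ∃ C, ∀ r ∈ Ioo (0:ℝ) 1, W r = kInt x φ g r + C := by
      refine ⟨W (1/2) - kInt x φ g (1/2), fun r hr => ?_⟩
      have hd : ∀ r ∈ Ioo (0:ℝ) 1, HasDerivAt (fun r => W r - kInt x φ g r) 0 r := by
        intro r hr
        exact ((h r hr).sub (hKd r hr)).congr_deriv (sub_self _)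
      have := isOpen_Ioo.is_const_of_deriv_eq_zero isPreconnected_Ioo
        (fun r hr => (hd r hr).differentiableAt.differentiableWithinAt)
        (fun r hr => (hd r hr).deriv) hr (⟨by norm_num, by norm_num⟩ : (1/2:ℝ) ∈ Ioo (0:ℝ) 1)
      linarith
    have hmem : Icc (0:ℝ) 1 ∈ nhdsWithin (0:ℝ) (Ioi 0) := by
      filter_upwards [Ioo_mem_nhdsGT (one_pos : (0:ℝ) < 1)] with s hs using ⟨hs.1.le, hs.2.le⟩
    have lim0 : ∀ f : ℝ → ℝ, ContinuousOn f (Icc 0 1) →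
        Filter.Tendsto f (nhdsWithin 0 (Ioi 0)) (nhds (f 0)) := fun f hf =>
      ((hf 0 ⟨le_rfl, zero_le_one⟩).mono_of_mem_nhdsWithin hmem)
    have hφ0 : 0 < φ (x * 0 ^ 2) := (hφ _ (hx1 0 ⟨le_rfl, zero_le_one⟩)).1
    have hVlim : Filter.Tendsto (fun r => (kInt x φ g r + C) / φ (x * r ^ 2) ^ 2)
        (nhdsWithin 0 (Ioi 0)) (nhds (C / φ (x * 0 ^ 2) ^ 2)) := by
      have := lim0 (fun r => (kInt x φ g r + C) / φ (x * r ^ 2) ^ 2)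
        ((hKc.add continuousOn_const).div (hφc.pow 2)
          (fun r hr => (pow_pos (hφ _ (hx1 r hr)).1 2).ne'))
      have hK0 : kInt x φ g 0 = 0 := by simp [kInt]
      simpa [hK0] using this
    have hFlim : Filter.Tendsto (fun r => r ^ (2 * n) * (F r / (r ^ (2 * n) * φ (x * r ^ 2))))
        (nhdsWithin 0 (Ioi 0)) (nhds 0) := by
      have := lim0 (fun r => F r / φ (x * r ^ 2))
        (hFcont.div hφc (fun r hr => ((hφ _ (hx1 r hr)).1).ne'))
      simp only [hF0, zero_div] at this
      refine this.congr' ?_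
      filter_upwards [self_mem_nhdsWithin, hmem] with s hs hs'
      have hs0 : 0 < s := hs
      have := (hφ _ (hx1 s hs')).1
      field_simp
    have hhd' : ∀ r ∈ Ioo (0:ℝ) 1, HasDerivAt (fun r => F r / (r ^ (2 * n) * φ (x * r ^ 2)))
        (((kInt x φ g r + C) / φ (x * r ^ 2) ^ 2) / r ^ (2 * n + 1)) r := by
      intro r hr
      refine (hhd r hr).congr_deriv ?_
      rw [hC r hr, div_div, mul_comm]
    have hC0 : C = 0 := by
      have l1 := limZero n hn _ _ _ hhd' hVlim hFlim
      have l2 := limZero n hn (fun r => -(F r / (r ^ (2 * n) * φ (x * r ^ 2))))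
        (fun r => -((kInt x φ g r + C) / φ (x * r ^ 2) ^ 2)) _
        (fun r hr => (hhd' r hr).neg.congr_deriv (by ring)) hVlim.neg
        (by simpa using hFlim.neg)
      have : C / φ (x * 0 ^ 2) ^ 2 = 0 := by linarith
      rcases div_eq_zero_iff.1 this with h | h
      · exact h
      · exact absurd h (by positivity)
    -- the difference is constant
    obtain ⟨A, hA⟩ : ∃ A, ∀ r ∈ Ioo (0:ℝ) 1,
        F r / (r ^ (2 * n) * φ (x * r ^ 2)) + ∫ ρ in r..1, k ρ = A := by
      refine ⟨F (1/2) / ((1/2) ^ (2 * n) * φ (x * (1/2) ^ 2)) + ∫ ρ in (1/2)..1, k ρ, fun r hr => ?_⟩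
      have hd : ∀ r ∈ Ioo (0:ℝ) 1, HasDerivAt
          (fun r => F r / (r ^ (2 * n) * φ (x * r ^ 2)) + ∫ ρ in r..1, k ρ) 0 r := by
        intro r hr
        refine ((hhd r hr).add (hkd r hr)).congr_deriv ?_
        rw [hC r hr, hC0, add_zero]
        simp [hk]
      exact isOpen_Ioo.is_const_of_deriv_eq_zero isPreconnected_Ioo
        (fun r hr => (hd r hr).differentiableAt.differentiableWithinAt)
        (fun r hr => (hd r hr).deriv) hr (⟨by norm_num, by norm_num⟩ : (1/2:ℝ) ∈ Ioo (0:ℝ) 1)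
    have hA1 : A = F 1 / φ x := by
      have hmem1 : Icc (0:ℝ) 1 ∈ nhdsWithin (1:ℝ) (Iio 1) := by
        filter_upwards [Ioo_mem_nhdsLT (one_pos : (0:ℝ) < 1)] with s hs using ⟨hs.1.le, hs.2.le⟩
      have m1 : (1:ℝ) ∈ Icc (0:ℝ) 1 := ⟨zero_le_one, le_rfl⟩
      have c1 : ContinuousWithinAt (fun r => F r / (r ^ (2 * n) * φ (x * r ^ 2))) (Iio 1) 1 := by
        apply ContinuousWithinAt.div
        · exact (hFcont 1 m1).mono_of_mem_nhdsWithin hmem1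
        · exact (by fun_prop : Continuous fun ρ : ℝ => ρ ^ (2 * n)).continuousWithinAt.mul
            ((hφc 1 m1).mono_of_mem_nhdsWithin hmem1)
        · have := (hφ _ (hx1 1 m1)).1
          positivity
      have l := (c1.add hk1).tendsto
      have l2 : Filter.Tendsto (fun r => F r / (r ^ (2 * n) * φ (x * r ^ 2)) + ∫ ρ in r..1, k ρ)
          (nhdsWithin 1 (Iio 1)) (nhds A) := by
        refine tendsto_const_nhds.congr' ?_
        filter_upwards [Ioo_mem_nhdsLT (one_pos : (0:ℝ) < 1)] with s hs using (hA s hs).symm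
      have := tendsto_nhds_unique l2 l
      simpa using this
    intro r hr
    rcases hr.1.eq_or_lt with h0 | h0
    · subst h0
      simp [hF0, show n ≠ 0 by omega]
    rcases hr.2.eq_or_lt with h1 | h1
    · subst h1
      have := (hφ x hx).1
      simp
      field_simp
    · have e := hA r ⟨h0, h1⟩
      have := (hφ _ (hx1 r hr)).1
      rw [← hA1, ← e]
      field_simp
      ring

/-- the continuous solutions on `[0,1]` (of class `C²` inside) with `F(0)=0` of
`(1-xr²)·r·F″(r) - (2n-1)(1-xr²)·F′(r) + 8rx·F(r) = g(r)` are exactly the one-parameter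
family given by the explicit hypergeometric formula, parametrized by the value `F(1)`. -/
theorem ode_solution_formula (n : ℕ) (hn : 1 ≤ n) (x : ℝ) (hx : x < 1) (hx0 : x ≠ 0)
    (g : ℝ → ℝ) (hg : ContinuousOn g (Icc 0 1))
    (F : ℝ → ℝ) (hFcont : ContinuousOn F (Icc 0 1))
    (hFsmooth : ContDiffOn ℝ 2 F (Ioo 0 1)) (hF0 : F 0 = 0) :
    (∀ r ∈ Ioo (0:ℝ) 1,
        (1 - x * r ^ 2) * r * deriv (deriv F) r
          - (2 * (n : ℝ) - 1) * (1 - x * r ^ 2) * deriv F r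
          + 8 * r * x * F r = g r)
    ↔ (∀ r ∈ Icc (0:ℝ) 1,
        F r = r ^ (2 * n) * Fhyp n (x * r ^ 2) *
          (F 1 / Fhyp n x -
            x ^ (n - 1) / 4 *
              ∫ τ in (x * r ^ 2)..x,
                (1 / (τ ^ (n + 1) * Fhyp n τ ^ 2)) *
                  ∫ s in (0:ℝ)..τ,
                    Fhyp n s / (1 - s) * Real.sqrt (x / s) * g (Real.sqrt (s / x)))) := by
  obtain ⟨f1, f2, hφ⟩ := phiFacts n hn
  rw [← main_equiv n hn x hx (Fhyp n) f1 f2 hφ g hg F hFcont hFsmooth hF0]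
  refine forall₂_congr fun r hr => ?_
  rcases hr.1.eq_or_lt with h0 | h0
  · subst h0
    simp [hF0, show n ≠ 0 by omega]
  · rw [outer_subst n hn x hx hx0 (Fhyp n) g r h0 hr.2]
end

section
/- Let A>0, B>0, let n≥2 be an integer, and let x_n∈(−∞,0) be any zero of ζ_n. Set 𝒫_n(x)=n/(n+1)+x·(−n/(n+2)+(A+2B)/(A(n+1))). Then: (1) 𝒫_n(x_n)<0; (2) if x_n∈(−1,0), then x_n>x_⋆, where x_⋆=−((2n+1)/(2(n+1)))·((A+2B)/(A(n+1))−(n+1)/(n+2))^{−1}; and (3) x_n<−A/(2B). -/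
open MeasureTheory Real Set

lemma weight_integrable (b d p x : ℝ) (hb : 1 < b) (hd : 0 < d) (hx : x ≤ 0) :
    IntervalIntegrable (fun t : ℝ => t ^ (b - 1) * (1 - t) ^ (d - 1) * (1 - x * t) ^ p)
      volume 0 1 := by
  have h1 : IntervalIntegrable (fun t : ℝ => (1 - t) ^ (d - 1)) volume 0 1 := by
    have h := (intervalIntegral.intervalIntegrable_rpow' (a := 0) (b := 1)
      (r := d - 1) (by linarith)).comp_sub_left 1
    simpa using h.symm
  have h2 : ContinuousOn (fun t : ℝ => t ^ (b - 1)) (uIcc 0 1) := by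
    apply ContinuousOn.rpow_const continuousOn_id
    intro t _
    right; linarith
  have h3 : ContinuousOn (fun t : ℝ => (1 - x * t) ^ p) (uIcc 0 1) := by
    apply ContinuousOn.rpow_const (by fun_prop)
    intro t ht
    left
    rw [uIcc_of_le zero_le_one] at ht
    have : x * t ≤ 0 := mul_nonpos_of_nonpos_of_nonneg hx ht.1
    linarith
  exact (h1.continuousOn_mul h2).mul_continuousOn h3

lemma weight_lt (b d p k u v : ℝ) (hb : 1 < b) (hd : 0 < d) (hu : u ≤ 0) (hv : v ≤ 0)
    (h : ∀ t ∈ Ioo (0:ℝ) 1, (1 - u * t) ^ p < k * (1 - v * t) ^ p) :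
    (∫ t in (0:ℝ)..1, t ^ (b - 1) * (1 - t) ^ (d - 1) * (1 - u * t) ^ p) <
      k * ∫ t in (0:ℝ)..1, t ^ (b - 1) * (1 - t) ^ (d - 1) * (1 - v * t) ^ p := by
  have iu := weight_integrable b d p u hb hd hu
  have iv := (weight_integrable b d p v hb hd hv).const_mul k
  have := intervalIntegral.intervalIntegral_pos_of_pos_on (iv.sub iu) (fun t ht => by
    have h1 : 0 < t ^ (b - 1) := rpow_pos_of_pos ht.1 _
    have h2 : 0 < (1 - t) ^ (d - 1) := rpow_pos_of_pos (by linarith [ht.2]) _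
    have h3 := h t ht
    have h4 := mul_pos (mul_pos h1 h2) (sub_pos.2 h3)
    have h5 : t ^ (b - 1) * (1 - t) ^ (d - 1) * (k * (1 - v * t) ^ p - (1 - u * t) ^ p)
      = k * (t ^ (b - 1) * (1 - t) ^ (d - 1) * (1 - v * t) ^ p)
        - t ^ (b - 1) * (1 - t) ^ (d - 1) * (1 - u * t) ^ p := by ring
    rw [h5] at h4
    exact h4) zero_lt_one
  rw [intervalIntegral.integral_sub iv iu, intervalIntegral.integral_const_mul] at this
  linarith

lemma Fhyp_lt (n : ℕ) (hn : 2 ≤ n) (k u v : ℝ) (hu : u ≤ 0) (hv : v ≤ 0)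
    (h : ∀ p : ℝ, 0 < p → p < 1 →
      ∀ t ∈ Ioo (0:ℝ) 1, (1 - u * t) ^ p < k * (1 - v * t) ^ p) :
    Fhyp n u < k * Fhyp n v := by
  have hn' : (2:ℝ) ≤ n := by exact_mod_cast hn
  have s1 : Real.sqrt ((n:ℝ) ^ 2 + 8) < n + 2 := by
    rw [Real.sqrt_lt' (by linarith)]; nlinarith
  have s2 : (n:ℝ) < Real.sqrt ((n:ℝ) ^ 2 + 8) := by
    apply Real.lt_sqrt_of_sq_lt; linarith
  have hb : 1 < bCoef n := by unfold bCoef; linarith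
  have hbc : bCoef n < n + 1 := by unfold bCoef; linarith
  have ha : 0 < -aCoef n := by unfold aCoef; linarith
  have ha' : -aCoef n < 1 := by unfold aCoef; linarith
  unfold Fhyp hyper
  rw [if_pos ⟨hbc, by linarith⟩, if_pos ⟨hbc, by linarith⟩]
  have hC : 0 < Real.Gamma ((n:ℝ) + 1) /
      (Real.Gamma (bCoef n) * Real.Gamma ((n:ℝ) + 1 - bCoef n)) :=
    div_pos (Real.Gamma_pos_of_pos (by linarith))
      (mul_pos (Real.Gamma_pos_of_pos (by linarith)) (Real.Gamma_pos_of_pos (by linarith)))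
  have := mul_lt_mul_of_pos_left
    (weight_lt (bCoef n) ((n:ℝ) + 1 - bCoef n) (-aCoef n) k u v hb (by linarith) hu hv
      (h _ ha ha')) hC
  rw [mul_left_comm k]
  exact this

lemma Fhyp_anti (n : ℕ) (hn : 2 ≤ n) (u v : ℝ) (hv : v < u) (hu : u ≤ 0) :
    Fhyp n u < Fhyp n v := by
  have := Fhyp_lt n hn 1 u v hu (by linarith) (fun p hp _ t ht => by
    rw [one_mul]
    apply rpow_lt_rpow _ _ hp
    · nlinarith [ht.1, ht.2]
    · nlinarith [ht.1, ht.2])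
  linarith

lemma Fhyp_pos (n : ℕ) (hn : 2 ≤ n) (u : ℝ) (hu : u ≤ 0) : 0 < Fhyp n u := by
  have := Fhyp_lt n hn 2 u u hu hu (fun p hp _ t ht => by
    have : 0 < (1 - u * t) ^ p := rpow_pos_of_pos (by nlinarith [ht.1, ht.2]) _
    linarith)
  linarith

lemma Fhyp_two (n : ℕ) (hn : 2 ≤ n) (u v : ℝ) (hu : u ≤ 0) (hu' : -1 < u) (hv : v ≤ 0) :
    Fhyp n u < 2 * Fhyp n v := by
  refine Fhyp_lt n hn 2 u v hu hv (fun p hp hp1 t ht => ?_)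
  have h1 : (1 - u * t) ^ p ≤ (1 - u * t) ^ (1:ℝ) :=
    rpow_le_rpow_of_exponent_le (by nlinarith [ht.1, ht.2]) hp1.le
  rw [rpow_one] at h1
  have h2 : 1 ≤ (1 - v * t) ^ p := one_le_rpow (by nlinarith [ht.1, ht.2]) hp.le
  nlinarith [ht.1, ht.2]

lemma moment_s15 (n : ℕ) (x c : ℝ) :
    (∫ τ in (0:ℝ)..1, c * (τ ^ n * (-1 + 2 * x * τ))) =
      c * (-(1 / ((n:ℝ) + 1)) + 2 * x / ((n:ℝ) + 2)) := by
  rw [intervalIntegral.integral_const_mul]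
  congr 1
  have : (fun τ : ℝ => τ ^ n * (-1 + 2 * x * τ))
      = fun τ => (-1) * τ ^ n + (2 * x) * τ ^ (n + 1) := by
    funext τ; ring
  rw [this, intervalIntegral.integral_add (by apply Continuous.intervalIntegrable; fun_prop)
    (by apply Continuous.intervalIntegrable; fun_prop),
    intervalIntegral.integral_const_mul, intervalIntegral.integral_const_mul,
    integral_pow, integral_pow]
  push_cast
  simp
  ring

/-- localization of any negative zero `x_n` of `ζ_n` when `A,B>0`. -/
theorem zetaDisp_zero_localization (A B : ℝ) (hA : 0 < A) (hB : 0 < B)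
    (n : ℕ) (hn : 2 ≤ n) (xn : ℝ) (hxn : xn < 0) (hzero : zetaDisp A B n xn = 0) :
    -- (1) 𝒫_n(x_n) < 0
    (n : ℝ) / ((n : ℝ) + 1)
        + xn * (-(n : ℝ) / ((n : ℝ) + 2) + (A + 2 * B) / (A * ((n : ℝ) + 1))) < 0 ∧
    -- (2) if x_n ∈ (-1,0) then x_⋆ < x_n
    (xn ∈ Ioo (-1 : ℝ) 0 →
      -((2 * (n : ℝ) + 1) / (2 * ((n : ℝ) + 1))) *
          ((A + 2 * B) / (A * ((n : ℝ) + 1)) - ((n : ℝ) + 1) / ((n : ℝ) + 2))⁻¹ < xn) ∧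
    -- (3) x_n < -A/(2B)
    xn < -A / (2 * B) := by
  have hn' : (2:ℝ) ≤ n := by exact_mod_cast hn
  have hF := Fhyp_pos n hn xn hxn.le
  have hG : IntervalIntegrable (fun τ : ℝ => Fhyp n (τ * xn) * τ ^ n * (-1 + 2 * xn * τ))
      volume 0 1 := by
    have h0 : IntervalIntegrable (fun τ : ℝ => Fhyp n (τ * xn)) volume 0 1 := by
      apply MonotoneOn.intervalIntegrable
      intro s hs t ht hst
      rw [uIcc_of_le zero_le_one] at hs ht
      rcases hst.eq_or_lt with rfl | hlt
      · exact le_rfl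
      · exact (Fhyp_anti n hn _ _ (by nlinarith) (by nlinarith [hs.1])).le
    exact (h0.mul_continuousOn (by fun_prop)).mul_continuousOn (by fun_prop)
  have hc : ∀ c : ℝ, IntervalIntegrable (fun τ : ℝ => c * (τ ^ n * (-1 + 2 * xn * τ)))
      volume 0 1 := fun c => by apply Continuous.intervalIntegrable; fun_prop
  have hlo : Fhyp n xn * (-(1 / ((n:ℝ) + 1)) + 2 * xn / ((n:ℝ) + 2)) <
      ∫ τ in (0:ℝ)..1, Fhyp n (τ * xn) * τ ^ n * (-1 + 2 * xn * τ) := by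
    have := intervalIntegral.intervalIntegral_pos_of_pos_on (hG.sub (hc (Fhyp n xn)))
      (fun τ hτ => by
        have h1 := Fhyp_anti n hn (τ * xn) xn (by nlinarith [hτ.2]) (by nlinarith [hτ.1])
        have h2 : 0 < τ ^ n := pow_pos hτ.1 n
        have h3 : 0 < 1 - 2 * xn * τ := by nlinarith [hτ.1]
        have h4 := mul_pos (mul_pos (sub_pos.2 h1) h2) h3
        have h5 : (Fhyp n xn - Fhyp n (τ * xn)) * τ ^ n * (1 - 2 * xn * τ)
          = Fhyp n (τ * xn) * τ ^ n * (-1 + 2 * xn * τ)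
            - Fhyp n xn * (τ ^ n * (-1 + 2 * xn * τ)) := by ring
        rw [h5] at h4
        exact h4) zero_lt_one
    rw [intervalIntegral.integral_sub hG (hc _), moment_s15] at this
    linarith
  have hhi : -1 < xn → (∫ τ in (0:ℝ)..1, Fhyp n (τ * xn) * τ ^ n * (-1 + 2 * xn * τ)) <
      (Fhyp n xn / 2) * (-(1 / ((n:ℝ) + 1)) + 2 * xn / ((n:ℝ) + 2)) := by
    intro hx1
    have := intervalIntegral.intervalIntegral_pos_of_pos_on ((hc (Fhyp n xn / 2)).sub hG)
      (fun τ hτ => by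
        have h1 := Fhyp_two n hn xn (τ * xn) hxn.le hx1 (by nlinarith [hτ.1])
        have h2 : 0 < τ ^ n := pow_pos hτ.1 n
        have h3 : 0 < 1 - 2 * xn * τ := by nlinarith [hτ.1]
        have h4 := mul_pos (mul_pos (by linarith : 0 < Fhyp n (τ * xn) - Fhyp n xn / 2) h2) h3
        have h5 : (Fhyp n (τ * xn) - Fhyp n xn / 2) * τ ^ n * (1 - 2 * xn * τ)
          = Fhyp n xn / 2 * (τ ^ n * (-1 + 2 * xn * τ))
            - Fhyp n (τ * xn) * τ ^ n * (-1 + 2 * xn * τ) := by ring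
        rw [h5] at h4
        exact h4) zero_lt_one
    rw [intervalIntegral.integral_sub (hc _) hG, moment_s15] at this
    linarith
  unfold zetaDisp at hzero
  generalize (∫ τ in (0:ℝ)..1, Fhyp n (τ * xn) * τ ^ n * (-1 + 2 * xn * τ)) = I at *
  generalize Fhyp n xn = F at *
  have hκ : (A + 2 * B) / (A * ((n : ℝ) + 1)) * (A * ((n:ℝ) + 1)) = A + 2 * B := by
    field_simp
  generalize (A + 2 * B) / (A * ((n : ℝ) + 1)) = κ at *
  generalize (n:ℝ) = m at *
  have e1 : m / (m + 1) = 1 - 1 / (m + 1) := by field_simp; ring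
  have e2 : -m / (m + 2) = -1 + 2 / (m + 2) := by field_simp; ring
  have P1 : m / (m + 1) + xn * (-m / (m + 2) + κ) < 0 := by
    have : F * (m / (m + 1) + xn * (-m / (m + 2) + κ)) < 0 := by
      rw [e1, e2]
      have : F * (1 - 1 / (m + 1) + xn * (-1 + 2 / (m + 2) + κ)) =
        F * (1 - xn + κ * xn) + F * (-(1 / (m + 1)) + 2 * xn / (m + 2)) := by ring
      linarith
    exact neg_of_mul_neg_right this hF.le
  refine ⟨P1, ?_, ?_⟩
  · rintro ⟨hx1, -⟩
    have q : 0 < (2 * m + 1) / (2 * (m + 1)) + xn * (κ - (m + 1) / (m + 2)) := by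
      have : 0 < F * ((2 * m + 1) / (2 * (m + 1)) + xn * (κ - (m + 1) / (m + 2))) := by
        have f1 : (2 * m + 1) / (2 * (m + 1)) = 1 - (1 / (m + 1)) / 2 := by field_simp; ring
        have f2 : (m + 1) / (m + 2) = 1 - 1 / (m + 2) := by field_simp; ring
        rw [f1, f2]
        have : F * (1 - (1 / (m + 1)) / 2 + xn * (κ - (1 - 1 / (m + 2)))) =
          F * (1 - xn + κ * xn) + F / 2 * (-(1 / (m + 1)) + 2 * xn / (m + 2)) := by ring
        linarith [hhi hx1]
      exact pos_of_mul_pos_right this hF.le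
    have D : 0 < κ - (m + 1) / (m + 2) := by
      have g1 : 1 / (m + 2) < m / (m + 1) := by
        rw [div_lt_div_iff₀ (by linarith) (by linarith)]; nlinarith
      have g2 : (m + 1) / (m + 2) = m / (m + 2) + 1 / (m + 2) := by field_simp
      have g3 : -m / (m + 2) = -(m / (m + 2)) := by ring
      rw [g3] at P1
      have g4 : 0 < m / (m + 1) := div_pos (by linarith) (by linarith)
      rw [g2]
      by_contra hcon
      nlinarith
    rw [← div_eq_mul_inv, div_lt_iff₀ D]
    linarith
  · rw [lt_div_iff₀ (by linarith)]
    have g : 0 < A * (m + 1) * (m + 2) := by positivity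
    have k1 := mul_neg_of_neg_of_pos P1 g
    have k2 : (m / (m + 1) + xn * (-m / (m + 2) + κ)) * (A * (m + 1) * (m + 2)) =
        m * A * (m + 2) - xn * m * A * (m + 1) + xn * (m + 2) * (κ * (A * (m + 1))) := by
      field_simp
      ring
    rw [k2, hκ] at k1
    have k3 : 0 ≤ -xn * A * (m ^ 2 - 2) :=
      mul_nonneg (mul_nonneg (by linarith) hA.le) (by nlinarith)
    have k4 : (m + 2) * (m * A + xn * (2 * B)) < 0 := by nlinarith
    have k5 : m * A + xn * (2 * B) < 0 := neg_of_mul_neg_right k4 (by linarith)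
    nlinarith
end
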